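/- Let a ∈ ℝ with |a| ≤ 1/2 and let b > π/2. Let Γ = ℤ(1,0) + ℤ(a,b) ⊂ ℝ², let ω : ℝ² → ℝ be smooth and Γ-periodic, let λ > 0, and let φ = (φ₁, φ₂) : ℝ² → ℂ² be smooth, not identically zero, with φ(p + (1,0)) = φ(p) and φ(p + (a,b)) = −φ(p) for all p ∈ ℝ², satisfying (∂ₓ − i∂_y)φ₂ = λ e^{ω} φ₁ and −(∂ₓ + i∂_y)φ₁ = λ e^{ω} φ₂ on ℝ². If equality λ² · b · ∫₀¹∫₀¹ e^{2ω(s + ta, tb)} ds dt = π²/b holds, then ω is constant. (Uniqueness part of Theorem 4.4: the flat metric is the unique smooth minimiser for the non-trivial spin structure.) -/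

import Mathlib

/-- Partial derivative in the first coordinate direction of a map on `ℝ × ℝ`. -/
noncomputable def dX (f : ℝ × ℝ → ℂ) (p : ℝ × ℝ) : ℂ := fderiv ℝ f p (1, 0)

/-- Partial derivative in the second coordinate direction of a map on `ℝ × ℝ`. -/
noncomputable def dY (f : ℝ × ℝ → ℂ) (p : ℝ × ℝ) : ℂ := fderiv ℝ f p (0, 1)

/-!
A spinor solving the Dirac equation is a map `Ψ` to `ℂ²` whose `∂̄`-derivative is orthogonal to the
complex line of `Ψ` and has length `V ‖Ψ‖`, where `V = λ e^ω`. Write `∫` for the average over the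
torus. Suppose first that `Ψ` has no zeros and write `Ψ = ‖Ψ‖ σ`. The equation makes the Hopf
connection pulled back by `σ` conjugate to `d log ‖Ψ‖`, so its mean vanishes and the horizontal
energy of `σ` equals `∫ V²`. Every curve `t ↦ σ (p + t (a, b))` joins a unit vector to its negative,
so its horizontal length and its holonomy add up to at least `π`. The holonomy has mean zero over
parallel curves and its variation is controlled by the curvature. These facts give `π² ≤ b² ∫ V²`
when `b` is large, and if `b² ∫ V²` exceeds `π²` only slightly, then the energy along the short
direction is so small that `π ≤ b ∫ V` up to a small error.

Zeros of `Ψ` are removed by passing to `(Ψ, δ χ)` with `χ` the constant-length eigenspinor of the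
flat metric, which changes the estimates by `∫ δ² / (‖Ψ‖² + δ²)`. This tends to zero because `log
‖Ψ‖` is almost subharmonic, so the zero set of `Ψ` is null. In the equality case `b² ∫ V² = π²` the
limit `δ → 0` yields `(∫ V)² ≥ ∫ V²`, hence `V` is constant by Cauchy–Schwarz.
-/

section Interval

open MeasureTheory intervalIntegral Set
open scoped RealInnerProductSpace

theorem sq_integral_mul_le_integral_sq_mul_integral_sq {α : Type*} [MeasurableSpace α]
    {μ : Measure α} {f g : α → ℝ} (hf : MemLp f 2 μ) (hg : MemLp g 2 μ) :
    (∫ x, f x * g x ∂μ) ^ 2 ≤ (∫ x, f x ^ 2 ∂μ) * ∫ x, g x ^ 2 ∂μ := by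
  have hfg : Integrable (fun x => f x * g x) μ := hf.integrable_mul hg
  have hquad (c : ℝ) : 0 ≤ (∫ x, f x ^ 2 ∂μ) * (c * c) + (2 * ∫ x, f x * g x ∂μ) * c
      + ∫ x, g x ^ 2 ∂μ := by
    calc 0 ≤ ∫ x, (c * f x + g x) ^ 2 ∂μ := integral_nonneg fun _ => sq_nonneg _
      _ = ∫ x, ((c * c) * f x ^ 2 + (2 * c) * (f x * g x) + g x ^ 2) ∂μ := by
        congr with x
        ring
      _ = _ := by
        have hf2 := hf.integrable_sq.const_mul (c * c)
        have hfg2 := hfg.const_mul (2 * c)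
        rw [MeasureTheory.integral_add (by exact hf2.add hfg2) hg.integrable_sq,
          MeasureTheory.integral_add hf2 hfg2, MeasureTheory.integral_const_mul,
          MeasureTheory.integral_const_mul]
        ring
  have hdiscrim := discrim_le_zero hquad
  rw [discrim] at hdiscrim
  linarith

theorem memLp_two_restrict_Ioc_of_continuous {F : Type*} [NormedAddCommGroup F]
    [SecondCountableTopology F] {f : ℝ → F} (hf : Continuous f) (a b : ℝ) :
    MemLp f 2 (volume.restrict (Ioc a b)) := by
  rw [memLp_two_iff_integrable_sq_norm hf.aestronglyMeasurable]
  exact (hf.norm.pow 2).integrableOn_Ioc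

theorem sq_intervalIntegral_mul_le {f g : ℝ → ℝ} (hf : Continuous f) (hg : Continuous g) {a b : ℝ}
    (hab : a ≤ b) :
    (∫ x in a..b, f x * g x) ^ 2 ≤ (∫ x in a..b, f x ^ 2) * ∫ x in a..b, g x ^ 2 := by
  simp only [integral_of_le hab]
  exact sq_integral_mul_le_integral_sq_mul_integral_sq
    (memLp_two_restrict_Ioc_of_continuous hf a b) (memLp_two_restrict_Ioc_of_continuous hg a b)

/-- The arcsine is not differentiable at `±1`, so it is applied to `κ * f` with `κ < 1`. -/
theorem arcsin_sub_arcsin_le_integral {a b : ℝ} (hab : a ≤ b)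
    {f f' g : ℝ → ℝ} (hf : ∀ t, HasDerivAt f (f' t) t) (hf'c : Continuous f') (hg : Continuous g)
    (hg0 : ∀ t, 0 ≤ g t) (hf1 : ∀ t, f t ^ 2 ≤ 1) (hf' : ∀ t, |f' t| ≤ √(1 - f t ^ 2) * g t) :
    Real.arcsin (f b) - Real.arcsin (f a) ≤ ∫ t in a..b, g t := by
  have hfc : Continuous f := continuous_iff_continuousAt.2 fun t => (hf t).continuousAt
  have hscaled (κ : ℝ) (hκ : κ ∈ Ioo 0 1) :
      Real.arcsin (κ * f b) - Real.arcsin (κ * f a) ≤ ∫ t in a..b, g t := by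
    obtain ⟨hκ0, hκ1⟩ := hκ
    have hpos (t : ℝ) : 0 < 1 - (κ * f t) ^ 2 := by nlinarith [hf1 t, sq_nonneg κ]
    have hderiv (t : ℝ) : HasDerivAt (fun t => Real.arcsin (κ * f t))
        (1 / √(1 - (κ * f t) ^ 2) * (κ * f' t)) t :=
      HasDerivAt.comp t (Real.hasDerivAt_arcsin (by nlinarith [hpos t]) (by nlinarith [hpos t]))
        ((hf t).const_mul κ)
    have hcont : Continuous fun t => 1 / √(1 - (κ * f t) ^ 2) * (κ * f' t) :=
      (continuous_const.div (by fun_prop) fun t => (Real.sqrt_pos.2 (hpos t)).ne').mul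
        (by fun_prop)
    rw [← integral_eq_sub_of_hasDerivAt (fun t _ => hderiv t) (hcont.intervalIntegrable a b)]
    refine integral_mono_on hab (hcont.intervalIntegrable a b) (hg.intervalIntegrable a b)
      fun t _ => ?_
    have hκsqrt : κ * √(1 - f t ^ 2) ≤ √(1 - (κ * f t) ^ 2) := by
      refine Real.le_sqrt_of_sq_le ?_
      rw [mul_pow, Real.sq_sqrt (by linarith [hf1 t])]
      nlinarith [hf1 t]
    rw [one_div, inv_mul_le_iff₀ (Real.sqrt_pos.2 (hpos t))]
    calc κ * f' t ≤ κ * (√(1 - f t ^ 2) * g t) := by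
          gcongr
          exact (le_abs_self _).trans (hf' t)
      _ = (κ * √(1 - f t ^ 2)) * g t := by ring
      _ ≤ √(1 - (κ * f t) ^ 2) * g t := by
        gcongr
        exact hg0 t
  have hlim : Filter.Tendsto (fun κ : ℝ => Real.arcsin (κ * f b) - Real.arcsin (κ * f a))
      (nhdsWithin 1 (Iio 1)) (nhds (Real.arcsin (1 * f b) - Real.arcsin (1 * f a))) :=
    (Continuous.tendsto (by fun_prop) 1).mono_left nhdsWithin_le_nhds
  rw [one_mul, one_mul] at hlim
  refine le_of_tendsto hlim ?_
  filter_upwards [Ioo_mem_nhdsLT (zero_lt_one' ℝ)] with κ hκ using hscaled κ hκ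

section Sphere

variable {E : Type*} [NormedAddCommGroup E] [InnerProductSpace ℝ E]

theorem abs_inner_le_sqrt_one_sub_inner_sq_mul_norm {x y z : E} (hx : ‖x‖ = 1) (hy : ‖y‖ = 1)
    (hyz : ⟪y, z⟫ = 0) : |⟪x, z⟫| ≤ √(1 - ⟪x, y⟫ ^ 2) * ‖z‖ := by
  have hsq : 1 - ⟪x, y⟫ ^ 2 = ‖x - ⟪x, y⟫ • y‖ ^ 2 := by
    rw [norm_sub_sq_real, norm_smul, hx, hy, inner_smul_right, Real.norm_eq_abs, mul_one, sq_abs]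
    ring
  have hz : ⟪x, z⟫ = ⟪x - ⟪x, y⟫ • y, z⟫ := by
    rw [inner_sub_left, real_inner_smul_left, hyz, mul_zero, sub_zero]
  rw [hsq, Real.sqrt_sq (norm_nonneg _), hz]
  exact abs_real_inner_le_norm _ _

theorem inner_eq_zero_of_hasDerivAt_of_norm_eq {σ : ℝ → E} {σ' : E} {t r : ℝ}
    (hσ : HasDerivAt σ σ' t) (hr : ∀ s, ‖σ s‖ = r) : ⟪σ t, σ'⟫ = 0 := by
  have hderiv := hσ.inner ℝ hσ
  simp only [real_inner_self_eq_norm_sq, hr, real_inner_comm (σ t) σ'] at hderiv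
  linarith [hderiv.unique (hasDerivAt_const t (r ^ 2))]

theorem pi_le_integral_norm_deriv_of_antipodal {σ σ' : ℝ → E} {a b : ℝ} (hab : a ≤ b)
    (hσ : ∀ t, HasDerivAt σ (σ' t) t) (hσ' : Continuous σ') (hunit : ∀ t, ‖σ t‖ = 1)
    (hanti : σ b = -σ a) : Real.pi ≤ ∫ t in a..b, ‖σ' t‖ := by
  have hderiv (t : ℝ) : HasDerivAt (fun t => ⟪σ b, σ t⟫) ⟪σ b, σ' t⟫ t := by
    simpa using (hasDerivAt_const t (σ b)).inner ℝ (hσ t)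
  have hperp (t : ℝ) : ⟪σ t, σ' t⟫ = 0 := inner_eq_zero_of_hasDerivAt_of_norm_eq (hσ t) hunit
  have hle (t : ℝ) : ⟪σ b, σ t⟫ ^ 2 ≤ 1 := by
    rw [sq_le_one_iff_abs_le_one]
    simpa [hunit] using abs_real_inner_le_norm (σ b) (σ t)
  have harcsin := arcsin_sub_arcsin_le_integral hab hderiv (continuous_const.inner hσ') hσ'.norm
    (fun t => norm_nonneg _) hle fun t =>
      abs_inner_le_sqrt_one_sub_inner_sq_mul_norm (hunit b) (hunit t) (hperp t)
  have hb : ⟪σ b, σ b⟫ = 1 := by rw [real_inner_self_eq_norm_sq, hunit, one_pow]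
  have ha : ⟪σ b, σ a⟫ = -1 := by rw [← neg_neg (σ a), ← hanti, inner_neg_right, hb]
  rw [ha, hb, Real.arcsin_neg, Real.arcsin_one] at harcsin
  linarith

end Sphere

theorem four_mul_pi_sq_mul_norm_fourierCoeffOn_sq_le {f f' : ℝ → ℂ} {a b : ℝ} (hab : a < b)
    (hf : ∀ s, HasDerivAt f (f' s) s) (hf' : Continuous f') (hper : f b = f a) {n : ℤ}
    (hn : n ≠ 0) : 4 * Real.pi ^ 2 * ‖fourierCoeffOn hab f n‖ ^ 2
      ≤ (b - a) ^ 2 * ‖fourierCoeffOn hab f' n‖ ^ 2 := by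
  have hnorm : ‖fourierCoeffOn hab f n‖
      = (b - a) * ‖fourierCoeffOn hab f' n‖ / (2 * Real.pi * |(n : ℝ)|) := by
    rw [fourierCoeffOn_of_hasDerivAt hab hn (fun s _ => hf s) (hf'.intervalIntegrable _ _), hper,
      sub_self, mul_zero, zero_sub, ← Complex.ofReal_sub]
    simp only [norm_mul, norm_div, norm_neg, norm_one, Complex.norm_I, Complex.norm_real,
      Complex.norm_intCast, Complex.norm_ofNat, Real.norm_eq_abs, abs_of_pos Real.pi_pos,
      abs_of_pos (sub_pos.2 hab), mul_one]
    ring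
  have hn1 : (1 : ℝ) ≤ (n : ℝ) ^ 2 := by
    rw [one_le_sq_iff_one_le_abs]
    exact_mod_cast Int.one_le_abs hn
  rw [hnorm, div_pow, mul_pow (2 * Real.pi), sq_abs, ← mul_div_assoc, div_le_iff₀ (by positivity)]
  calc 4 * Real.pi ^ 2 * ((b - a) * ‖fourierCoeffOn hab f' n‖) ^ 2
      = (b - a) ^ 2 * ‖fourierCoeffOn hab f' n‖ ^ 2 * ((2 * Real.pi) ^ 2 * 1) := by ring
    _ ≤ _ := by gcongr

theorem wirtinger_inequality {f f' : ℝ → ℝ} {a b : ℝ} (hab : a < b)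
    (hf : ∀ s, HasDerivAt f (f' s) s) (hf' : Continuous f') (hper : f b = f a)
    (hmean : ∫ s in a..b, f s = 0) :
    4 * Real.pi ^ 2 * ∫ s in a..b, f s ^ 2 ≤ (b - a) ^ 2 * ∫ s in a..b, f' s ^ 2 := by
  have hfc : Continuous f := continuous_iff_continuousAt.2 fun t => (hf t).continuousAt
  have parseval (g : ℝ → ℝ) (hg : Continuous g) :=
    hasSum_sq_fourierCoeffOn hab
      (memLp_two_restrict_Ioc_of_continuous (Complex.continuous_ofReal.comp hg) a b)
  have hcoeff (n : ℤ) : 4 * Real.pi ^ 2 * ‖fourierCoeffOn hab (fun s => (f s : ℂ)) n‖ ^ 2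
      ≤ (b - a) ^ 2 * ‖fourierCoeffOn hab (fun s => (f' s : ℂ)) n‖ ^ 2 := by
    rcases eq_or_ne n 0 with rfl | hn
    · have h0 : fourierCoeffOn hab (fun s => (f s : ℂ)) 0 = 0 := by
        rw [fourierCoeffOn_eq_integral]
        simp [intervalIntegral.integral_ofReal, hmean]
      rw [h0, norm_zero, zero_pow two_ne_zero, mul_zero]
      positivity
    · exact four_mul_pi_sq_mul_norm_fourierCoeffOn_sq_le hab (fun s => (hf s).ofReal_comp)
        (Complex.continuous_ofReal.comp hf') (by rw [hper]) hn
  have hsum := hasSum_le hcoeff ((parseval f hfc).mul_left _) ((parseval f' hf').mul_left _)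
  simp only [Function.comp_apply, Complex.norm_real, Real.norm_eq_abs, sq_abs, smul_eq_mul]
    at hsum
  refine le_of_mul_le_mul_left ?_ (inv_pos.2 (sub_pos.2 hab))
  linarith

theorem abs_sub_le_half_integral_abs_deriv {h h' : ℝ → ℝ} {a b : ℝ}
    (hd : ∀ s, HasDerivAt h (h' s) s) (hc : Continuous h') (hper : h b = h a) {r s : ℝ}
    (hr : r ∈ Icc a b) (hs : s ∈ Icc a b) : |h r - h s| ≤ (∫ x in a..b, |h' x|) / 2 := by
  wlog hrs : r ≤ s generalizing r s
  · rw [abs_sub_comm]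
    exact this hs hr (le_of_not_ge hrs)
  have hint (x y : ℝ) : IntervalIntegrable (fun x => |h' x|) volume x y :=
    hc.abs.intervalIntegrable x y
  have hvar {x y : ℝ} (hxy : x ≤ y) : |h y - h x| ≤ ∫ z in x..y, |h' z| := by
    rw [← integral_eq_sub_of_hasDerivAt (fun z _ => hd z) (hc.intervalIntegrable x y)]
    exact abs_integral_le_integral_abs hxy
  have harc := abs_le.1 (hvar hrs)
  have hleft := abs_le.1 (hvar hr.1)
  have hright := abs_le.1 (hvar hs.2)
  rw [← integral_add_adjacent_intervals (hint a s) (hint s b),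
    ← integral_add_adjacent_intervals (hint a r) (hint r s), abs_le]
  constructor <;> linarith

theorem sub_mul_abs_le_half_integral_abs_deriv {h h' : ℝ → ℝ} {a b : ℝ}
    (hd : ∀ s, HasDerivAt h (h' s) s) (hc : Continuous h') (hper : h b = h a)
    (hmean : ∫ s in a..b, h s = 0) {s : ℝ} (hs : s ∈ Icc a b) :
    (b - a) * |h s| ≤ (b - a) * ((∫ x in a..b, |h' x|) / 2) := by
  have hab : a ≤ b := hs.1.trans hs.2
  have hhc : Continuous h := continuous_iff_continuousAt.2 fun t => (hd t).continuousAt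
  calc (b - a) * |h s| = |∫ r in a..b, (h s - h r)| := by
        rw [integral_sub intervalIntegrable_const (hhc.intervalIntegrable _ _), hmean, sub_zero,
          intervalIntegral.integral_const, smul_eq_mul, abs_mul, abs_of_nonneg (sub_nonneg.2 hab)]
    _ ≤ ∫ r in a..b, |h s - h r| := abs_integral_le_integral_abs hab
    _ ≤ ∫ r in a..b, ((∫ x in a..b, |h' x|) / 2) :=
      integral_mono_on hab (Continuous.intervalIntegrable (by fun_prop) _ _)
        intervalIntegrable_const fun r hr => abs_sub_le_half_integral_abs_deriv hd hc hper hs hr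
    _ = _ := by rw [intervalIntegral.integral_const, smul_eq_mul]

theorem sixteen_mul_integral_sq_le_sq_integral_abs_deriv {h h' : ℝ → ℝ}
    (hd : ∀ s, HasDerivAt h (h' s) s) (hc : Continuous h') (hper : h 1 = h 0)
    (hmean : ∫ s in (0 : ℝ)..1, h s = 0) :
    16 * ∫ s in (0 : ℝ)..1, h s ^ 2 ≤ (∫ s in (0 : ℝ)..1, |h' s|) ^ 2 := by
  have hhc : Continuous h := continuous_iff_continuousAt.2 fun t => (hd t).continuousAt
  have : IsProbabilityMeasure (volume.restrict (Ioc (0 : ℝ) 1)) := ⟨by simp⟩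
  obtain ⟨r, hr, hmin⟩ :=
    isCompact_Icc.exists_isMinOn (nonempty_Icc.2 zero_le_one) hhc.continuousOn
  have hrange (s : ℝ) (hs : s ∈ Ioc (0 : ℝ) 1) :
      h s ∈ Icc (h r) (h r + (∫ x in (0 : ℝ)..1, |h' x|) / 2) := by
    have hs' := Ioc_subset_Icc_self hs
    have hosc := (abs_le.1 (abs_sub_le_half_integral_abs_deriv hd hc hper hs' hr)).2
    exact ⟨hmin hs', by linarith⟩
  have hpopoviciu := ProbabilityTheory.variance_le_sq_of_bounded
    (μ := volume.restrict (Ioc (0 : ℝ) 1))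
    ((ae_restrict_iff' measurableSet_Ioc).2 (Filter.Eventually.of_forall hrange)) hhc.aemeasurable
  rw [ProbabilityTheory.variance_of_integral_eq_zero hhc.aemeasurable
    (by rwa [← integral_of_le zero_le_one]), ← integral_of_le zero_le_one] at hpopoviciu
  linarith

theorem exists_periodic_primitive {h : ℝ → ℝ} (hh : Continuous h)
    (hmean : ∫ s in (0 : ℝ)..1, h s = 0) :
    ∃ H : ℝ → ℝ, (∀ s, HasDerivAt H (h s) s) ∧ H 1 = H 0 ∧ ∫ s in (0 : ℝ)..1, H s = 0 := by
  have hd (s : ℝ) : HasDerivAt (fun s => ∫ r in (0 : ℝ)..s, h r) (h s) s :=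
    hh.integral_hasStrictDerivAt 0 s |>.hasDerivAt
  have hcont : Continuous fun s => ∫ r in (0 : ℝ)..s, h r :=
    continuous_iff_continuousAt.2 fun s => (hd s).continuousAt
  refine ⟨fun s => (∫ r in (0 : ℝ)..s, h r) - ∫ t in (0 : ℝ)..1, ∫ r in (0 : ℝ)..t, h r,
    fun s => (hd s).sub_const _, by simp [hmean], ?_⟩
  rw [integral_sub (hcont.intervalIntegrable _ _) intervalIntegrable_const,
    intervalIntegral.integral_const, sub_zero, one_smul, sub_self]

/-- With `H` the mean-zero primitive of `h`, Cauchy–Schwarz gives `|H| ≤ 1`. Since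
`∫ h ^ 2 = -∫ H * h'`, the splitting `f = (1 - H ^ 2) * f + H ^ 2 * f` turns the curvature bound
into `5/4 * ∫ h ^ 2`, which together with Wirtinger's inequality absorbs the loss. -/
theorem pi_sq_le_integral_of_integral_sq_le_four {h h' f g : ℝ → ℝ}
    (hd : ∀ s, HasDerivAt h (h' s) s) (hc : Continuous h') (hper : h 1 = h 0)
    (hmean : ∫ s in (0 : ℝ)..1, h s = 0) (hsmall : ∫ s in (0 : ℝ)..1, h s ^ 2 ≤ 4)
    (hf : Continuous f) (hg : Continuous g) (hlength : ∀ s, Real.pi ^ 2 - h s ^ 2 ≤ f s)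
    (hcurv : ∀ s κ, 5 / 4 * κ * |h' s| ≤ 25 / 16 * g s + κ ^ 2 * f s) :
    Real.pi ^ 2 ≤ ∫ s in (0 : ℝ)..1, (f s + 25 / 16 * g s) := by
  have hhc : Continuous h := continuous_iff_continuousAt.2 fun t => (hd t).continuousAt
  obtain ⟨H, hHd, hHper, hHmean⟩ := exists_periodic_primitive hhc hmean
  have hHc : Continuous H := continuous_iff_continuousAt.2 fun t => (hHd t).continuousAt
  have hwirtinger := wirtinger_inequality zero_lt_one hHd hhc hHper hHmean
  have hL1 : ∫ s in (0 : ℝ)..1, |h s| ≤ 2 := by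
    have hcs := sq_intervalIntegral_mul_le hhc.abs (continuous_const (y := (1 : ℝ))) zero_le_one
    simp only [mul_one, sq_abs, one_pow, intervalIntegral.integral_const, sub_zero, one_smul]
      at hcs
    nlinarith
  have hHle (s : ℝ) (hs : s ∈ Icc (0 : ℝ) 1) : H s ^ 2 ≤ 1 := by
    have hosc := sub_mul_abs_le_half_integral_abs_deriv hHd hhc hHper hHmean hs
    exact (sq_le_one_iff_abs_le_one _).2 (by linarith)
  have hparts : ∫ s in (0 : ℝ)..1, H s * h' s = -∫ s in (0 : ℝ)..1, h s ^ 2 := by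
    rw [integral_mul_deriv_eq_deriv_mul (fun x _ => hHd x) (fun x _ => hd x)
      (hhc.intervalIntegrable _ _) (hc.intervalIntegrable _ _), hHper, hper, sub_self, zero_sub]
    simp only [sq]
  calc Real.pi ^ 2 ≤ Real.pi ^ 2 - (∫ s in (0 : ℝ)..1, h s ^ 2)
        - Real.pi ^ 2 * (∫ s in (0 : ℝ)..1, H s ^ 2) - 5 / 4 * ∫ s in (0 : ℝ)..1, H s * h' s := by
        linarith
    _ = ∫ s in (0 : ℝ)..1, (Real.pi ^ 2 - h s ^ 2 - Real.pi ^ 2 * H s ^ 2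
        - 5 / 4 * (H s * h' s)) := by
      rw [intervalIntegral.integral_sub, intervalIntegral.integral_sub,
        intervalIntegral.integral_sub, intervalIntegral.integral_const,
        intervalIntegral.integral_const_mul, intervalIntegral.integral_const_mul, sub_zero,
        one_smul] <;> exact Continuous.intervalIntegrable (by fun_prop) _ _
    _ ≤ ∫ s in (0 : ℝ)..1, (f s + 25 / 16 * g s) := by
      refine integral_mono_on zero_le_one (Continuous.intervalIntegrable (by fun_prop) _ _)
        (Continuous.intervalIntegrable (by fun_prop) _ _) fun s hs => ?_
      have hcurv' := hcurv s |H s|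
      have habs : -(H s * h' s) ≤ |H s| * |h' s| := by
        rw [← abs_mul]
        exact neg_le_abs _
      rw [sq_abs] at hcurv'
      nlinarith [mul_nonneg (sub_nonneg.2 (hHle s hs)) (sub_nonneg.2 (hlength s)),
        mul_nonneg (sq_nonneg (H s)) (sq_nonneg (h s))]

/-- If `∫ h ^ 2` is large then so is the total variation of `h`, and the curvature bound alone
suffices. -/
theorem pi_sq_le_integral_of_curvature_bound {h h' f g : ℝ → ℝ}
    (hd : ∀ s, HasDerivAt h (h' s) s) (hc : Continuous h') (hper : h 1 = h 0)
    (hmean : ∫ s in (0 : ℝ)..1, h s = 0) (hf : Continuous f) (hg : Continuous g)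
    (hf0 : ∀ s, 0 ≤ f s) (hg0 : ∀ s, 0 ≤ g s)
    (hlength : ∀ s, Real.pi ^ 2 - h s ^ 2 ≤ f s) (hcurv : ∀ s, h' s ^ 2 ≤ 4 * (g s * f s)) :
    Real.pi ^ 2 ≤ ∫ s in (0 : ℝ)..1, (f s + 25 / 16 * g s) := by
  have hcurv' (s κ : ℝ) : 5 / 4 * κ * |h' s| ≤ 25 / 16 * g s + κ ^ 2 * f s := by
    have hf0s := hf0 s
    have hg0s := hg0 s
    refine le_of_sq_le_sq ?_ (by positivity)
    rw [mul_pow, sq_abs]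
    nlinarith [mul_le_mul_of_nonneg_left (hcurv s) (sq_nonneg κ),
      sq_nonneg (25 / 16 * g s - κ ^ 2 * f s)]
  rcases le_or_gt (∫ s in (0 : ℝ)..1, h s ^ 2) 4 with hsmall | hlarge
  · exact pi_sq_le_integral_of_integral_sq_le_four hd hc hper hmean hsmall hf hg hlength hcurv'
  have hvar := sixteen_mul_integral_sq_le_sq_integral_abs_deriv hd hc hper hmean
  have hvar0 : 0 ≤ ∫ s in (0 : ℝ)..1, |h' s| :=
    integral_nonneg zero_le_one fun _ _ => abs_nonneg _
  have hvar8 : 8 ≤ ∫ s in (0 : ℝ)..1, |h' s| := by nlinarith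
  calc Real.pi ^ 2 ≤ 5 / 4 * ∫ s in (0 : ℝ)..1, |h' s| := by
        nlinarith [Real.pi_lt_d2, Real.pi_pos]
    _ = ∫ s in (0 : ℝ)..1, 5 / 4 * |h' s| := (intervalIntegral.integral_const_mul _ _).symm
    _ ≤ ∫ s in (0 : ℝ)..1, (f s + 25 / 16 * g s) :=
      integral_mono_on zero_le_one (Continuous.intervalIntegrable (by fun_prop) _ _)
        (Continuous.intervalIntegrable (by fun_prop) _ _)
        fun s _ => by linarith [hcurv' s 1]

end Interval

section HopfConnection

open MeasureTheory intervalIntegral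
open scoped RealInnerProductSpace

variable {E : Type*} [NormedAddCommGroup E] [InnerProductSpace ℝ E] (J : E →ₗᵢ[ℝ] E)

/-- The component of a vector orthogonal to `J x`. When `J` is a complex structure and `x` is a unit
vector, this is the horizontal component with respect to the Hopf fibration `x ↦ [x]`, so applied to
the derivative of a map `σ` into the unit sphere it gives the covariant derivative of `σ`. -/
noncomputable def horizontal (x : E) : E →L[ℝ] E :=
  ContinuousLinearMap.id ℝ E - (innerSL ℝ (J x)).smulRight (J x)

/-- Multiplication by the phase `cos θ + J sin θ`. -/
noncomputable def phaseRotation (θ : ℝ) (x : E) : E := Real.cos θ • x + Real.sin θ • J x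

variable {J}

theorem horizontal_apply (x ξ : E) : horizontal J x ξ = ξ - ⟪J x, ξ⟫ • J x := by
  simp [horizontal]

theorem continuous_horizontal {X : Type*} [TopologicalSpace X] {f g : X → E} (hf : Continuous f)
    (hg : Continuous g) : Continuous fun t => horizontal J (f t) (g t) := by
  simp only [horizontal_apply]
  have := J.continuous
  fun_prop

theorem inner_complexStructure_horizontal {x : E} (hx : ‖x‖ = 1) (ξ : E) :
    ⟪J x, horizontal J x ξ⟫ = 0 := by
  rw [horizontal_apply, inner_sub_right, real_inner_smul_right, real_inner_self_eq_norm_sq,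
    J.norm_map, hx, one_pow, mul_one, sub_self]

section ComplexStructure

variable (hJ : ∀ x, J (J x) = -x)
include hJ

theorem inner_complexStructure_left (x y : E) : ⟪J x, y⟫ = -⟪x, J y⟫ := by
  rw [← J.inner_map_map, hJ, inner_neg_left]

theorem inner_complexStructure_self (x : E) : ⟪J x, x⟫ = 0 := by
  have := inner_complexStructure_left hJ x x
  rw [real_inner_comm] at this ⊢
  linarith

theorem norm_phaseRotation (θ : ℝ) (x : E) : ‖phaseRotation J θ x‖ = ‖x‖ := by
  refine (sq_eq_sq₀ (norm_nonneg _) (norm_nonneg _)).1 ?_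
  rw [phaseRotation, norm_add_sq_real, norm_smul, norm_smul, real_inner_smul_left,
    real_inner_smul_right, real_inner_comm, inner_complexStructure_self hJ, J.norm_map, mul_pow,
    mul_pow, Real.norm_eq_abs, Real.norm_eq_abs, sq_abs, sq_abs]
  linear_combination ‖x‖ ^ 2 * Real.cos_sq_add_sin_sq θ

theorem hasDerivAt_phaseRotation {θ : ℝ → ℝ} {σ : ℝ → E} {θ' : ℝ} {σ' : E} {t : ℝ}
    (hθ : HasDerivAt θ θ' t) (hσ : HasDerivAt σ σ' t) :
    HasDerivAt (fun t => phaseRotation J (θ t) (σ t))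
      (phaseRotation J (θ t) (σ' + θ' • J (σ t))) t := by
  have hJσ : HasDerivAt (fun t => J (σ t)) (J σ') t :=
    J.toContinuousLinearMap.hasFDerivAt.comp_hasDerivAt t hσ
  refine ((hθ.cos.smul hσ).add (hθ.sin.smul hJσ)).congr_deriv ?_
  simp only [phaseRotation, map_add, map_smul, hJ]
  module

/-- Rotating by the phase that compensates the connection form up to its mean keeps the endpoints
and makes the vertical speed constant. -/
theorem pi_le_integral_norm_horizontal_add_smul {σ σ' : ℝ → E} (hσ : ∀ t, HasDerivAt σ (σ' t) t)
    (hσ' : Continuous σ') (hunit : ∀ t, ‖σ t‖ = 1) (hanti : σ 1 = -σ 0) :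
    Real.pi ≤ ∫ t in (0 : ℝ)..1,
      ‖horizontal J (σ t) (σ' t) + (∫ s in (0 : ℝ)..1, ⟪J (σ s), σ' s⟫) • J (σ t)‖ := by
  set h := ∫ s in (0 : ℝ)..1, ⟪J (σ s), σ' s⟫ with hh
  have hσc : Continuous σ := continuous_iff_continuousAt.2 fun t => (hσ t).continuousAt
  have hJc := J.continuous
  have hcont : Continuous fun t => h - ⟪J (σ t), σ' t⟫ := by fun_prop
  set θ : ℝ → ℝ := fun t => ∫ s in (0 : ℝ)..t, (h - ⟪J (σ s), σ' s⟫) with hθ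
  have hθd (t : ℝ) : HasDerivAt θ (h - ⟪J (σ t), σ' t⟫) t :=
    (hcont.integral_hasStrictDerivAt 0 t).hasDerivAt
  have hθc : Continuous θ := continuous_iff_continuousAt.2 fun t => (hθd t).continuousAt
  have hθ0 : θ 0 = 0 := integral_same
  have hθ1 : θ 1 = 0 := by
    simp only [hθ]
    rw [intervalIntegral.integral_sub intervalIntegrable_const
      (Continuous.intervalIntegrable (by fun_prop) _ _), intervalIntegral.integral_const, ← hh,
      sub_zero, one_smul, sub_self]
  have hvel (t : ℝ) : ‖horizontal J (σ t) (σ' t) + h • J (σ t)‖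
      = ‖phaseRotation J (θ t) (σ' t + (h - ⟪J (σ t), σ' t⟫) • J (σ t))‖ := by
    rw [norm_phaseRotation hJ, horizontal_apply]
    congr 1
    module
  simp only [hvel]
  refine pi_le_integral_norm_deriv_of_antipodal zero_le_one
    (fun t => hasDerivAt_phaseRotation hJ (hθd t) (hσ t)) ?_
    (fun t => (norm_phaseRotation hJ _ _).trans (hunit t)) ?_
  · unfold phaseRotation
    fun_prop
  · simp [phaseRotation, hθ0, hθ1, hanti]

theorem pi_le_integral_norm_horizontal_add_abs {σ σ' : ℝ → E} (hσ : ∀ t, HasDerivAt σ (σ' t) t)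
    (hσ' : Continuous σ') (hunit : ∀ t, ‖σ t‖ = 1) (hanti : σ 1 = -σ 0) :
    Real.pi ≤ (∫ t in (0 : ℝ)..1, ‖horizontal J (σ t) (σ' t)‖)
      + |∫ s in (0 : ℝ)..1, ⟪J (σ s), σ' s⟫| := by
  have hσc : Continuous σ := continuous_iff_continuousAt.2 fun t => (hσ t).continuousAt
  have hJc := J.continuous
  have hT : Continuous fun t => horizontal J (σ t) (σ' t) := continuous_horizontal hσc hσ'
  refine (pi_le_integral_norm_horizontal_add_smul hJ hσ hσ' hunit hanti).trans ?_
  set h := ∫ s in (0 : ℝ)..1, ⟪J (σ s), σ' s⟫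
  calc ∫ t in (0 : ℝ)..1, ‖horizontal J (σ t) (σ' t) + h • J (σ t)‖
      ≤ ∫ t in (0 : ℝ)..1, (‖horizontal J (σ t) (σ' t)‖ + |h|) := by
        refine integral_mono_on zero_le_one (Continuous.intervalIntegrable (by fun_prop) _ _)
          (Continuous.intervalIntegrable (by fun_prop) _ _) fun t _ => ?_
        refine (norm_add_le _ _).trans_eq ?_
        rw [norm_smul, J.norm_map, hunit, mul_one, Real.norm_eq_abs]
    _ = _ := by
      rw [intervalIntegral.integral_add (hT.norm.intervalIntegrable _ _) intervalIntegrable_const,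
        intervalIntegral.integral_const, sub_zero, one_smul]

theorem pi_sq_le_integral_norm_horizontal_sq_add_sq {σ σ' : ℝ → E}
    (hσ : ∀ t, HasDerivAt σ (σ' t) t) (hσ' : Continuous σ') (hunit : ∀ t, ‖σ t‖ = 1)
    (hanti : σ 1 = -σ 0) :
    Real.pi ^ 2 ≤ (∫ t in (0 : ℝ)..1, ‖horizontal J (σ t) (σ' t)‖ ^ 2)
      + (∫ s in (0 : ℝ)..1, ⟪J (σ s), σ' s⟫) ^ 2 := by
  have hσc : Continuous σ := continuous_iff_continuousAt.2 fun t => (hσ t).continuousAt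
  have hJc := J.continuous
  have hT : Continuous fun t => horizontal J (σ t) (σ' t) := continuous_horizontal hσc hσ'
  have hlength := pi_le_integral_norm_horizontal_add_smul hJ hσ hσ' hunit hanti
  set h := ∫ s in (0 : ℝ)..1, ⟪J (σ s), σ' s⟫
  have hcs := sq_intervalIntegral_mul_le (f := fun t => ‖horizontal J (σ t) (σ' t) + h • J (σ t)‖)
    (by fun_prop) (continuous_const (y := (1 : ℝ))) zero_le_one
  have hpythagoras (t : ℝ) : ‖horizontal J (σ t) (σ' t) + h • J (σ t)‖ ^ 2
      = ‖horizontal J (σ t) (σ' t)‖ ^ 2 + h ^ 2 := by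
    rw [norm_add_sq_real, real_inner_smul_right, real_inner_comm,
      inner_complexStructure_horizontal (hunit t), norm_smul, J.norm_map, hunit, Real.norm_eq_abs,
      mul_one, sq_abs, mul_zero, mul_zero, add_zero]
  simp only [hpythagoras, mul_one, one_pow, intervalIntegral.integral_const, sub_zero, one_smul]
    at hcs
  rw [intervalIntegral.integral_add (by exact (hT.norm.pow 2).intervalIntegrable _ _)
    intervalIntegrable_const, intervalIntegral.integral_const, sub_zero, one_smul] at hcs
  exact (pow_le_pow_left₀ Real.pi_pos.le hlength 2).trans hcs

end ComplexStructure

end HopfConnection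

section Cell

open MeasureTheory Set Function

theorem hasDerivAt_intervalIntegral_of_continuous_deriv {F F' : ℝ → ℝ → ℝ} {a b : ℝ}
    (hF : ∀ s t, HasDerivAt (fun s => F s t) (F' s t) s) (hFc : Continuous (uncurry F))
    (hF'c : Continuous (uncurry F')) (s : ℝ) :
    HasDerivAt (fun s => ∫ t in a..b, F s t) (∫ t in a..b, F' s t) s := by
  obtain ⟨C, hC⟩ := ((isCompact_Icc (a := s - 1) (b := s + 1)).prod
    (isCompact_uIcc (a := a) (b := b))).exists_bound_of_continuousOn hF'c.continuousOn
  have hslice (r : ℝ) : Continuous (F r) := hFc.comp (by fun_prop : Continuous fun t => (r, t))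
  have hslice' (r : ℝ) : Continuous (F' r) := hF'c.comp (by fun_prop : Continuous fun t => (r, t))
  exact (intervalIntegral.hasDerivAt_integral_of_dominated_loc_of_deriv_le
    (bound := fun _ => C) (Icc_mem_nhds (sub_one_lt s) (lt_add_one s))
    (Filter.Eventually.of_forall fun r => (hslice r).aestronglyMeasurable)
    ((hslice s).intervalIntegrable _ _) (hslice' s).aestronglyMeasurable
    (Filter.Eventually.of_forall fun t ht r hr => hC (r, t) ⟨hr, uIoc_subset_uIcc ht⟩)
    intervalIntegrable_const (Filter.Eventually.of_forall fun t _ r _ => hF r t)).2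

variable {P : Type*} [NormedAddCommGroup P] [NormedSpace ℝ P]

theorem continuous_fderiv_apply_const {F : Type*} [NormedAddCommGroup F] [NormedSpace ℝ F]
    {f : P → F} (hf : ContDiff ℝ 1 f) (v : P) : Continuous fun p => fderiv ℝ f p v :=
  (hf.continuous_fderiv one_ne_zero).clm_apply continuous_const

theorem hasDerivAt_comp_smul_add {F : Type*} [NormedAddCommGroup F] [NormedSpace ℝ F] {f : P → F}
    (hf : Differentiable ℝ f) (v p : P) (t : ℝ) :
    HasDerivAt (fun t => f (t • v + p)) (fderiv ℝ f (t • v + p) v) t := by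
  refine (hf _).hasFDerivAt.comp_hasDerivAt t ?_
  simpa using ((hasDerivAt_id t).smul_const v).add_const p

theorem exists_mem_cell_eq_of_periodic {X : Type*} {f : P → X} {v w : P}
    (hspan : Submodule.span ℝ {v, w} = ⊤) (hv : Periodic f v) (hw : Periodic f w) (p : P) :
    ∃ q ∈ Ioc (0 : ℝ) 1 ×ˢ Ioc (0 : ℝ) 1, f (q.1 • v + q.2 • w) = f p := by
  obtain ⟨x, y, rfl⟩ := Submodule.mem_span_pair.1 (hspan ▸ Submodule.mem_top : p ∈ _)
  have hmem (z : ℝ) : z - (⌈z⌉ - 1 : ℤ) ∈ Ioc (0 : ℝ) 1 := by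
    push_cast
    constructor <;> linarith [Int.ceil_lt_add_one z, Int.le_ceil z]
  refine ⟨(x - (⌈x⌉ - 1 : ℤ), y - (⌈y⌉ - 1 : ℤ)), ⟨hmem x, hmem y⟩, ?_⟩
  refine .trans ?_ ((hw.sub_zsmul_eq (⌈y⌉ - 1)).trans (hv.sub_zsmul_eq (⌈x⌉ - 1)))
  congr 1
  simp only [← Int.cast_smul_eq_zsmul ℝ]
  module

theorem exists_le_of_periodic {f : P → ℝ} {v w : P} (hf : Continuous f)
    (hspan : Submodule.span ℝ {v, w} = ⊤) (hv : Periodic f v) (hw : Periodic f w) :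
    ∃ C, ∀ p, f p ≤ C := by
  have hcont : Continuous fun q : ℝ × ℝ => f (q.1 • v + q.2 • w) := by fun_prop
  obtain ⟨C, hC⟩ := ((isCompact_Icc (a := (0 : ℝ)) (b := 1)).prod
    (isCompact_Icc (a := (0 : ℝ)) (b := 1))).bddAbove_image hcont.continuousOn
  refine ⟨C, fun p => ?_⟩
  obtain ⟨q, hq, hqp⟩ := exists_mem_cell_eq_of_periodic hspan hv hw p
  exact hqp ▸ hC (mem_image_of_mem _ (prod_mono Ioc_subset_Icc_self Ioc_subset_Icc_self hq))

variable [MeasurableSpace P] [BorelSpace P]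

/-- The uniform probability measure on the parallelogram spanned by `v` and `w`. For linearly
independent `v` and `w`, integrating a periodic function against it averages over the torus
`P / (ℤ v + ℤ w)`. -/
noncomputable def cellMeasure (v w : P) : Measure P :=
  ((volume.restrict (Ioc (0 : ℝ) 1)).prod (volume.restrict (Ioc (0 : ℝ) 1))).map
    fun q => q.1 • v + q.2 • w

theorem measurable_smul_add_smul (v w : P) : Measurable fun q : ℝ × ℝ => q.1 • v + q.2 • w :=
  Continuous.measurable (by fun_prop)

instance isProbabilityMeasure_cellMeasure (v w : P) : IsProbabilityMeasure (cellMeasure v w) := by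
  have : IsProbabilityMeasure (volume.restrict (Ioc (0 : ℝ) 1)) := ⟨by simp⟩
  exact Measure.isProbabilityMeasure_map (measurable_smul_add_smul v w).aemeasurable

theorem cellMeasure_comm (v w : P) : cellMeasure v w = cellMeasure w v := by
  rw [cellMeasure, ← Measure.prod_swap, Measure.map_map (measurable_smul_add_smul v w)
    measurable_swap, cellMeasure]
  congr 1
  ext q
  exact add_comm _ _

theorem integrable_cellMeasure {f : P → ℝ} (hf : Continuous f) (v w : P) :
    Integrable f (cellMeasure v w) := by
  rw [cellMeasure, integrable_map_measure hf.aestronglyMeasurable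
    (measurable_smul_add_smul v w).aemeasurable, Measure.prod_restrict]
  exact (Continuous.integrableOn_Icc (f := f ∘ fun q : ℝ × ℝ => q.1 • v + q.2 • w)
    (a := 0) (b := 1) (by fun_prop)).mono_set
      (Icc_prod_eq (0 : ℝ × ℝ) 1 ▸ prod_mono Ioc_subset_Icc_self Ioc_subset_Icc_self)

theorem integral_cellMeasure_mul_le_sqrt {f g : P → ℝ} (hf : Continuous f) (hg : Continuous g)
    {v w : P} {A B : ℝ} (hA : ∫ p, f p ^ 2 ∂cellMeasure v w ≤ A)
    (hB : ∫ p, g p ^ 2 ∂cellMeasure v w ≤ B) : ∫ p, f p * g p ∂cellMeasure v w ≤ √(A * B) := by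
  have hmemLp {h : P → ℝ} (hh : Continuous h) : MemLp h 2 (cellMeasure v w) :=
    (memLp_two_iff_integrable_sq hh.aestronglyMeasurable).2 (integrable_cellMeasure (hh.pow 2) v w)
  refine (le_abs_self _).trans (Real.abs_le_sqrt ?_)
  refine (sq_integral_mul_le_integral_sq_mul_integral_sq (hmemLp hf) (hmemLp hg)).trans ?_
  have hA0 : 0 ≤ A := (integral_nonneg fun p => sq_nonneg (f p)).trans hA
  gcongr

theorem integral_cellMeasure {f : P → ℝ} (hf : Continuous f) (v w : P) :
    ∫ p, f p ∂cellMeasure v w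
      = ∫ s in (0 : ℝ)..1, ∫ t in (0 : ℝ)..1, f (s • v + t • w) := by
  have hint := integrable_cellMeasure hf v w
  rw [cellMeasure, integrable_map_measure hf.aestronglyMeasurable
    (measurable_smul_add_smul v w).aemeasurable] at hint
  rw [cellMeasure, integral_map (measurable_smul_add_smul v w).aemeasurable
    hf.aestronglyMeasurable]
  simp only [intervalIntegral.integral_of_le zero_le_one]
  exact integral_prod _ hint

theorem integral_cellMeasure_swap {f : P → ℝ} (hf : Continuous f) (v w : P) :
    ∫ p, f p ∂cellMeasure v w
      = ∫ t in (0 : ℝ)..1, ∫ s in (0 : ℝ)..1, f (s • v + t • w) := by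
  simp only [cellMeasure_comm v w, integral_cellMeasure hf, add_comm]

theorem integral_cellMeasure_add_smul {f : P → ℝ} (hf : Continuous f) {v : P} (hv : Periodic f v)
    (w : P) (c : ℝ) : ∫ p, f p ∂cellMeasure v (w + c • v) = ∫ p, f p ∂cellMeasure v w := by
  rw [integral_cellMeasure_swap hf, integral_cellMeasure_swap hf]
  congr with t
  have hper : Periodic (fun s : ℝ => f (s • v + t • w)) 1 := fun s => by
    simpa [add_smul, add_right_comm] using hv (s • v + t • w)
  calc ∫ s in (0 : ℝ)..1, f (s • v + t • (w + c • v))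
      = ∫ s in (0 : ℝ)..1, f ((s + t * c) • v + t • w) := by
        congr with s
        congr 1
        module
    _ = ∫ s in (t * c)..(t * c + 1), f (s • v + t • w) := by
      rw [intervalIntegral.integral_comp_add_right fun s => f (s • v + t • w), zero_add,
        add_comm 1]
    _ = ∫ s in (0 : ℝ)..1, f (s • v + t • w) := by
      rw [hper.intervalIntegral_add_eq (t * c) 0, zero_add]

theorem integral_cellMeasure_fderiv_left {f : P → ℝ} (hf : ContDiff ℝ 1 f) {v : P}
    (hv : Periodic f v) (w : P) : ∫ p, fderiv ℝ f p v ∂cellMeasure v w = 0 := by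
  have hcont := continuous_fderiv_apply_const hf v
  rw [integral_cellMeasure_swap hcont]
  refine intervalIntegral.integral_zero_ae (Filter.Eventually.of_forall fun t _ => ?_)
  rw [intervalIntegral.integral_eq_sub_of_hasDerivAt
    (fun s _ => hasDerivAt_comp_smul_add (hf.differentiable one_ne_zero) v (t • w) s)
    (Continuous.intervalIntegrable (by fun_prop) _ _), zero_smul, one_smul, zero_add,
    add_comm v, hv, sub_self]

theorem integral_cellMeasure_fderiv {f : P → ℝ} (hf : ContDiff ℝ 1 f) {v w : P}
    (hspan : Submodule.span ℝ {v, w} = ⊤) (hv : Periodic f v) (hw : Periodic f w) (e : P) :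
    ∫ p, fderiv ℝ f p e ∂cellMeasure v w = 0 := by
  obtain ⟨x, y, rfl⟩ := Submodule.mem_span_pair.1 (hspan ▸ Submodule.mem_top : e ∈ _)
  have hint (u : P) : Integrable (fun p => fderiv ℝ f p u) (cellMeasure v w) :=
    integrable_cellMeasure (continuous_fderiv_apply_const hf u) v w
  simp only [map_add, map_smul, smul_eq_mul]
  rw [integral_add ((hint v).const_mul x) ((hint w).const_mul y), integral_const_mul,
    integral_const_mul, integral_cellMeasure_fderiv_left hf hv, cellMeasure_comm,
    integral_cellMeasure_fderiv_left hf hw, mul_zero, mul_zero, add_zero]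

theorem eq_zero_of_integral_cellMeasure_eq_zero {f : P → ℝ} (hf : Continuous f) (hf0 : ∀ p, 0 ≤ f p)
    {v w : P} (hspan : Submodule.span ℝ {v, w} = ⊤) (hv : Periodic f v) (hw : Periodic f w)
    (hint : ∫ p, f p ∂cellMeasure v w = 0) (p : P) : f p = 0 := by
  have hae := (integral_eq_zero_iff_of_nonneg hf0 (integrable_cellMeasure hf v w)).1 hint
  have hae' := ae_of_ae_map (measurable_smul_add_smul v w).aemeasurable hae
  rw [Measure.prod_restrict] at hae'
  have hclosure : Ioc (0 : ℝ) 1 ×ˢ Ioc (0 : ℝ) 1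
      ⊆ closure (interior (Ioc (0 : ℝ) 1 ×ˢ Ioc (0 : ℝ) 1)) := by
    rw [interior_prod_eq, interior_Ioc, closure_prod_eq, closure_Ioo zero_ne_one]
    exact prod_mono Ioc_subset_Icc_self Ioc_subset_Icc_self
  have hzero := Measure.eqOn_of_ae_eq hae' (Continuous.continuousOn (by fun_prop))
    continuousOn_const hclosure
  obtain ⟨q, hq, hqp⟩ := exists_mem_cell_eq_of_periodic hspan hv hw p
  exact hqp ▸ hzero hq

end Cell

section Curvature

open MeasureTheory Set Function
open scoped RealInnerProductSpace

variable {P : Type*} [NormedAddCommGroup P] [NormedSpace ℝ P]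

theorem contDiff_fderiv_apply_const {F : Type*} [NormedAddCommGroup F] [NormedSpace ℝ F]
    {f : P → F} (hf : ContDiff ℝ 2 f) (v : P) : ContDiff ℝ 1 fun p => fderiv ℝ f p v :=
  (hf.fderiv_right (by norm_num)).clm_apply contDiff_const

theorem fderiv_fderiv_apply_comm {F : Type*} [NormedAddCommGroup F] [NormedSpace ℝ F] {f : P → F}
    (hf : ContDiff ℝ 2 f) (v w p : P) :
    fderiv ℝ (fun q => fderiv ℝ f q v) p w = fderiv ℝ (fun q => fderiv ℝ f q w) p v := by
  have hd : DifferentiableAt ℝ (fderiv ℝ f) p :=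
    (hf.fderiv_right (m := 1) (by norm_num)).differentiable one_ne_zero p
  have hsymm := hf.contDiffAt.isSymmSndFDerivAt (x := p)
    (by rw [minSmoothness_of_isRCLikeNormedField])
  have happly (u : P) : fderiv ℝ (fun q => fderiv ℝ f q u) p
      = (fderiv ℝ (fderiv ℝ f) p).flip u := by
    rw [fderiv_clm_apply hd (differentiableAt_const u)]
    simp
  rw [happly, happly]
  exact hsymm.eq w v

theorem periodic_norm_of_antiperiodic {X F : Type*} [Add X] [SeminormedAddCommGroup F] {f : X → F}
    {c : X} (hf : Antiperiodic f c) : Periodic (fun x => ‖f x‖) c := fun x => by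
  simp only [hf x, norm_neg]

theorem periodic_fderiv {F : Type*} [NormedAddCommGroup F] [NormedSpace ℝ F] {f : P → F} {v : P}
    (hf : Periodic f v) : Periodic (fderiv ℝ f) v := fun p => by
  rw [← fderiv_comp_add_right, hf.funext]

theorem antiperiodic_fderiv {F : Type*} [NormedAddCommGroup F] [NormedSpace ℝ F] {f : P → F}
    {v : P} (hf : Antiperiodic f v) : Antiperiodic (fderiv ℝ f) v := fun p => by
  rw [← fderiv_comp_add_right, hf.funext]
  exact fderiv_neg

variable {E : Type*} [NormedAddCommGroup E] [InnerProductSpace ℝ E]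

/-- The connection form of the Hopf connection pulled back by `σ`, evaluated on the vector `v`. -/
noncomputable def connectionForm (J : E →ₗᵢ[ℝ] E) (σ : P → E) (v p : P) : ℝ :=
  ⟪J (σ p), fderiv ℝ σ p v⟫

/-- The covariant derivative of `σ` in the direction `v` with respect to the Hopf connection. -/
noncomputable def covDeriv (J : E →ₗᵢ[ℝ] E) (σ : P → E) (v p : P) : E :=
  horizontal J (σ p) (fderiv ℝ σ p v)

variable {J : E →ₗᵢ[ℝ] E} {σ : P → E}

theorem covDeriv_eq (v p : P) :
    covDeriv J σ v p = fderiv ℝ σ p v - connectionForm J σ v p • J (σ p) :=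
  horizontal_apply _ _

theorem covDeriv_smul_add_smul (x y : ℝ) (v w p : P) :
    covDeriv J σ (x • v + y • w) p = x • covDeriv J σ v p + y • covDeriv J σ w p := by
  simp only [covDeriv, map_add, map_smul]

theorem connectionForm_smul_add_smul (x y : ℝ) (v w p : P) : connectionForm J σ (x • v + y • w) p
    = x * connectionForm J σ v p + y * connectionForm J σ w p := by
  simp only [connectionForm, map_add, map_smul, inner_add_right, real_inner_smul_right]

theorem continuous_covDeriv (hσ : ContDiff ℝ 1 σ) (v : P) : Continuous (covDeriv J σ v) :=
  continuous_horizontal hσ.continuous (continuous_fderiv_apply_const hσ v)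

theorem contDiff_connectionForm (hσ : ContDiff ℝ 2 σ) (v : P) :
    ContDiff ℝ 1 (connectionForm J σ v) :=
  (J.toContinuousLinearMap.contDiff.comp (hσ.of_le one_le_two)).inner ℝ
    (contDiff_fderiv_apply_const hσ v)

theorem periodic_connectionForm {v : P} (hσ : Periodic σ v) (w : P) :
    Periodic (connectionForm J σ w) v := fun p => by
  simp only [connectionForm, hσ p, periodic_fderiv hσ p]

theorem periodic_connectionForm_of_antiperiodic {v : P} (hσ : Antiperiodic σ v) (w : P) :
    Periodic (connectionForm J σ w) v := fun p => by
  simp [connectionForm, hσ p, antiperiodic_fderiv hσ p]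

theorem periodic_covDeriv {v : P} (hσ : Periodic σ v) (w : P) :
    Periodic (covDeriv J σ w) v := fun p => by
  simp only [covDeriv, hσ p, periodic_fderiv hσ p]

theorem inner_fderiv_eq_zero_of_norm_eq (hσ : Differentiable ℝ σ) {r : ℝ} (hr : ∀ p, ‖σ p‖ = r)
    (p v : P) : ⟪σ p, fderiv ℝ σ p v⟫ = 0 := by
  simpa using inner_eq_zero_of_hasDerivAt_of_norm_eq (hasDerivAt_comp_smul_add hσ v p 0)
    fun t => hr _

section ComplexStructure

variable (hJ : ∀ x, J (J x) = -x)
include hJ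

theorem fderiv_connectionForm_sub_fderiv_connectionForm (hσ : ContDiff ℝ 2 σ) (v w p : P) :
    fderiv ℝ (connectionForm J σ w) p v - fderiv ℝ (connectionForm J σ v) p w
      = 2 * ⟪J (fderiv ℝ σ p v), fderiv ℝ σ p w⟫ := by
  have hσd := hσ.differentiable two_ne_zero
  have hJσ : HasFDerivAt (fun q => J (σ q)) (J.toContinuousLinearMap ∘L fderiv ℝ σ p) p :=
    J.toContinuousLinearMap.hasFDerivAt.comp p (hσd p).hasFDerivAt
  have hderiv (u u' : P) : fderiv ℝ (connectionForm J σ u) p u'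
      = ⟪J (σ p), fderiv ℝ (fun q => fderiv ℝ σ q u) p u'⟫
        + ⟪J (fderiv ℝ σ p u'), fderiv ℝ σ p u⟫ := by
    unfold connectionForm
    rw [fderiv_inner_apply ℝ hJσ.differentiableAt
      ((contDiff_fderiv_apply_const hσ u).differentiable one_ne_zero p), hJσ.fderiv]
    rfl
  rw [hderiv, hderiv, fderiv_fderiv_apply_comm hσ w v,
    inner_complexStructure_left hJ _ (fderiv ℝ σ p v), real_inner_comm (J (fderiv ℝ σ p v))]
  ring

theorem inner_covDeriv_eq_zero (hσ : Differentiable ℝ σ) (hunit : ∀ p, ‖σ p‖ = 1) (v p : P) :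
    ⟪σ p, covDeriv J σ v p⟫ = 0 := by
  rw [covDeriv_eq, inner_sub_right, inner_fderiv_eq_zero_of_norm_eq hσ hunit,
    real_inner_smul_right, real_inner_comm, inner_complexStructure_self hJ, mul_zero, sub_zero]

theorem inner_covDeriv_covDeriv (hσ : Differentiable ℝ σ) (hunit : ∀ p, ‖σ p‖ = 1) (v w p : P) :
    ⟪J (covDeriv J σ v p), covDeriv J σ w p⟫ = ⟪J (fderiv ℝ σ p v), fderiv ℝ σ p w⟫ := by
  have hperp := inner_fderiv_eq_zero_of_norm_eq hσ hunit p
  have hself : ⟪σ p, J (σ p)⟫ = 0 := by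
    rw [real_inner_comm, inner_complexStructure_self hJ]
  have hv : ⟪fderiv ℝ σ p v, σ p⟫ = 0 := by rw [real_inner_comm, hperp]
  simp only [covDeriv_eq, map_sub, map_smul, hJ, inner_sub_left, inner_sub_right,
    real_inner_smul_left, real_inner_smul_right, inner_neg_left, J.inner_map_map, hperp, hv, hself]
  ring

end ComplexStructure

/-- The holonomy, as an angle, of the Hopf connection pulled back by `σ` along the segment from
`s • v` to `s • v + w`. -/
noncomputable def holonomy (J : E →ₗᵢ[ℝ] E) (σ : P → E) (v w : P) (s : ℝ) : ℝ :=
  ∫ t in (0 : ℝ)..1, connectionForm J σ w (s • v + t • w)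

theorem holonomy_one_eq_holonomy_zero {v : P} (hσ : Periodic σ v) (w : P) :
    holonomy J σ v w 1 = holonomy J σ v w 0 := by
  simp only [holonomy, one_smul, zero_smul, zero_add, add_comm v, periodic_connectionForm hσ w _]

section ComplexStructure

variable (hJ : ∀ x, J (J x) = -x)
include hJ

theorem hasDerivAt_holonomy (hσ : ContDiff ℝ 2 σ) (hunit : ∀ p, ‖σ p‖ = 1) (v : P) {w : P}
    (hw : Antiperiodic σ w) (s : ℝ) : HasDerivAt (holonomy J σ v w)
      (2 * ∫ t in (0 : ℝ)..1,
        ⟪J (covDeriv J σ v (s • v + t • w)), covDeriv J σ w (s • v + t • w)⟫) s := by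
  have hσ1 : ContDiff ℝ 1 σ := hσ.of_le one_le_two
  have hA (u : P) := contDiff_connectionForm (J := J) hσ u
  have hdA (u u' : P) := continuous_fderiv_apply_const (hA u) u'
  have hX := continuous_covDeriv (J := J) hσ1 v
  have hW := continuous_covDeriv (J := J) hσ1 w
  have hJc := J.continuous
  refine (hasDerivAt_intervalIntegral_of_continuous_deriv
    (fun s t => hasDerivAt_comp_smul_add ((hA w).differentiable one_ne_zero) v (t • w) s)
    ((hA w).continuous.comp (by fun_prop)) ((hdA w v).comp (by fun_prop)) s).congr_deriv ?_
  have hcurv (p : P) : fderiv ℝ (connectionForm J σ w) p v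
      = fderiv ℝ (connectionForm J σ v) p w + 2 * ⟪J (covDeriv J σ v p), covDeriv J σ w p⟫ := by
    rw [inner_covDeriv_covDeriv hJ (hσ.differentiable two_ne_zero) hunit,
      ← fderiv_connectionForm_sub_fderiv_connectionForm hJ hσ v w p]
    ring
  have hclosed : ∫ t in (0 : ℝ)..1, fderiv ℝ (connectionForm J σ v) (t • w + s • v) w = 0 := by
    rw [intervalIntegral.integral_eq_sub_of_hasDerivAt (fun t _ => hasDerivAt_comp_smul_add
        ((hA v).differentiable one_ne_zero) w (s • v) t)
      (((hdA v w).comp (by fun_prop)).intervalIntegrable _ _), one_smul, zero_smul, zero_add,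
      add_comm w, periodic_connectionForm_of_antiperiodic hw v, sub_self]
  have hdAc : Continuous fun t : ℝ => fderiv ℝ (connectionForm J σ v) (s • v + t • w) w :=
    (hdA v w).comp (by fun_prop)
  simp only [hcurv]
  rw [intervalIntegral.integral_add (hdAc.intervalIntegrable _ _)
    (Continuous.intervalIntegrable (by fun_prop) _ _), intervalIntegral.integral_const_mul]
  simp only [add_comm (s • v)] at hclosed ⊢
  rw [hclosed, zero_add]

end ComplexStructure

theorem abs_intervalIntegral_inner_le {f g : ℝ → E} (hf : Continuous f) (hg : Continuous g)
    {a b : ℝ} (hab : a ≤ b) :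
    |∫ t in a..b, ⟪J (f t), g t⟫| ≤ ∫ t in a..b, ‖f t‖ * ‖g t‖ := by
  have hJc := J.continuous
  refine (intervalIntegral.abs_integral_le_integral_abs hab).trans <|
    intervalIntegral.integral_mono_on hab (Continuous.intervalIntegrable (by fun_prop) _ _)
      (Continuous.intervalIntegrable (by fun_prop) _ _) fun t _ => ?_
  simpa using abs_real_inner_le_norm (J (f t)) (g t)

section CellEstimates

variable [MeasurableSpace P] [BorelSpace P]

theorem integral_holonomy (hσ : ContDiff ℝ 2 σ) (v w : P) :
    ∫ s in (0 : ℝ)..1, holonomy J σ v w s = ∫ p, connectionForm J σ w p ∂cellMeasure v w :=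
  (integral_cellMeasure (contDiff_connectionForm hσ w).continuous v w).symm

variable (hJ : ∀ x, J (J x) = -x)
include hJ

theorem abs_holonomy_le_integral_norm_covDeriv_mul (hσ : ContDiff ℝ 2 σ) (hunit : ∀ p, ‖σ p‖ = 1)
    {v w : P} (hv : Periodic σ v) (hw : Antiperiodic σ w)
    (hmean : ∫ p, connectionForm J σ w p ∂cellMeasure v w = 0) {s : ℝ} (hs : s ∈ Icc 0 1) :
    |holonomy J σ v w s| ≤ ∫ p, ‖covDeriv J σ v p‖ * ‖covDeriv J σ w p‖ ∂cellMeasure v w := by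
  have hX := continuous_covDeriv (J := J) (hσ.of_le one_le_two) v
  have hW := continuous_covDeriv (J := J) (hσ.of_le one_le_two) w
  have hJc := J.continuous
  have hcurv : Continuous fun s : ℝ => ∫ t in (0 : ℝ)..1,
      ⟪J (covDeriv J σ v (s • v + t • w)), covDeriv J σ w (s • v + t • w)⟫ :=
    intervalIntegral.continuous_parametric_intervalIntegral_of_continuous' (by fun_prop) _ _
  have hnorm : Continuous fun s : ℝ => ∫ t in (0 : ℝ)..1,
      ‖covDeriv J σ v (s • v + t • w)‖ * ‖covDeriv J σ w (s • v + t • w)‖ :=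
    intervalIntegral.continuous_parametric_intervalIntegral_of_continuous' (by fun_prop) _ _
  have hosc := sub_mul_abs_le_half_integral_abs_deriv (hasDerivAt_holonomy hJ hσ hunit v hw)
    (hcurv.const_mul 2) (holonomy_one_eq_holonomy_zero hv w) (integral_holonomy hσ v w ▸ hmean) hs
  rw [sub_zero, one_mul, one_mul] at hosc
  refine hosc.trans ?_
  rw [← intervalIntegral.integral_div, integral_cellMeasure (by fun_prop)]
  refine intervalIntegral.integral_mono_on zero_le_one
    (Continuous.intervalIntegrable (by fun_prop) _ _) (hnorm.intervalIntegrable _ _) fun r _ => ?_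
  rw [abs_mul, abs_two, mul_div_cancel_left₀ _ two_ne_zero]
  exact abs_intervalIntegral_inner_le (by fun_prop) (by fun_prop) zero_le_one

theorem pi_le_integral_norm_covDeriv_add_integral_mul (hσ : ContDiff ℝ 2 σ)
    (hunit : ∀ p, ‖σ p‖ = 1) {v w : P} (hv : Periodic σ v) (hw : Antiperiodic σ w)
    (hmean : ∫ p, connectionForm J σ w p ∂cellMeasure v w = 0) :
    Real.pi ≤ (∫ p, ‖covDeriv J σ w p‖ ∂cellMeasure v w)
      + ∫ p, ‖covDeriv J σ v p‖ * ‖covDeriv J σ w p‖ ∂cellMeasure v w := by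
  have hσd := hσ.differentiable two_ne_zero
  have hW := continuous_covDeriv (J := J) (hσ.of_le one_le_two) w
  have hdσ := continuous_fderiv_apply_const (hσ.of_le one_le_two) w
  set C := ∫ p, ‖covDeriv J σ v p‖ * ‖covDeriv J σ w p‖ ∂cellMeasure v w
  have hslice (s : ℝ) (hs : s ∈ Icc (0 : ℝ) 1) :
      Real.pi - C ≤ ∫ t in (0 : ℝ)..1, ‖covDeriv J σ w (s • v + t • w)‖ := by
    have hlength := pi_le_integral_norm_horizontal_add_abs hJ
      (fun t => hasDerivAt_comp_smul_add hσd w (s • v) t) (hdσ.comp (by fun_prop))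
      (fun t => hunit _) (by simp only [one_smul, zero_smul, zero_add, add_comm w, hw _])
    have hhol := abs_holonomy_le_integral_norm_covDeriv_mul hJ hσ hunit hv hw hmean hs
    simp only [add_comm _ (s • v)] at hlength
    simp only [holonomy, connectionForm] at hhol
    simp only [covDeriv]
    linarith
  have hnorm : Continuous fun s : ℝ => ∫ t in (0 : ℝ)..1, ‖covDeriv J σ w (s • v + t • w)‖ :=
    intervalIntegral.continuous_parametric_intervalIntegral_of_continuous' (by fun_prop) _ _
  rw [integral_cellMeasure hW.norm, ← sub_le_iff_le_add]
  simpa using intervalIntegral.integral_mono_on zero_le_one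
    (intervalIntegrable_const (μ := volume)) (hnorm.intervalIntegrable _ _) hslice

theorem pi_sq_le_integral_norm_covDeriv_sq (hσ : ContDiff ℝ 2 σ) (hunit : ∀ p, ‖σ p‖ = 1)
    {v w : P} (hv : Periodic σ v) (hw : Antiperiodic σ w)
    (hmean : ∫ p, connectionForm J σ w p ∂cellMeasure v w = 0) :
    Real.pi ^ 2 ≤ ∫ p, (‖covDeriv J σ w p‖ ^ 2 + 25 / 16 * ‖covDeriv J σ v p‖ ^ 2)
      ∂cellMeasure v w := by
  have hX := continuous_covDeriv (J := J) (hσ.of_le one_le_two) v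
  have hW := continuous_covDeriv (J := J) (hσ.of_le one_le_two) w
  have hσd := hσ.differentiable two_ne_zero
  have hdσ := continuous_fderiv_apply_const (hσ.of_le one_le_two) w
  have hJc := J.continuous
  have hmono := pi_sq_le_integral_of_curvature_bound (hasDerivAt_holonomy hJ hσ hunit v hw)
    (continuous_const.mul
      (intervalIntegral.continuous_parametric_intervalIntegral_of_continuous' (by fun_prop) _ _))
    (holonomy_one_eq_holonomy_zero hv w) (integral_holonomy hσ v w ▸ hmean)
    (f := fun s => ∫ t in (0 : ℝ)..1, ‖covDeriv J σ w (s • v + t • w)‖ ^ 2)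
    (g := fun s => ∫ t in (0 : ℝ)..1, ‖covDeriv J σ v (s • v + t • w)‖ ^ 2)
    (intervalIntegral.continuous_parametric_intervalIntegral_of_continuous' (by fun_prop) _ _)
    (intervalIntegral.continuous_parametric_intervalIntegral_of_continuous' (by fun_prop) _ _)
    (fun s => intervalIntegral.integral_nonneg zero_le_one fun t _ => sq_nonneg _)
    (fun s => intervalIntegral.integral_nonneg zero_le_one fun t _ => sq_nonneg _)
    (fun s => ?_) (fun s => ?_)
  · rw [integral_cellMeasure (by fun_prop)]
    refine hmono.trans_eq (intervalIntegral.integral_congr fun s _ => ?_)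
    rw [intervalIntegral.integral_add (Continuous.intervalIntegrable (by fun_prop) _ _)
      (Continuous.intervalIntegrable (by fun_prop) _ _), intervalIntegral.integral_const_mul]
  · have hlength := pi_sq_le_integral_norm_horizontal_sq_add_sq hJ
      (fun t => hasDerivAt_comp_smul_add hσd w (s • v) t) (hdσ.comp (by fun_prop))
      (fun t => hunit _) (by simp only [one_smul, zero_smul, zero_add, add_comm w, hw _])
    simp only [add_comm _ (s • v)] at hlength
    simp only [covDeriv, holonomy, connectionForm]
    linarith
  · rw [mul_pow, ← sq_abs (∫ t in (0 : ℝ)..1, _)]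
    have hcs := sq_intervalIntegral_mul_le
      (f := fun t => ‖covDeriv J σ v (s • v + t • w)‖)
      (g := fun t => ‖covDeriv J σ w (s • v + t • w)‖)
      (by fun_prop) (by fun_prop) zero_le_one
    have habs := abs_intervalIntegral_inner_le (J := J)
      (f := fun t => covDeriv J σ v (s • v + t • w)) (g := fun t => covDeriv J σ w (s • v + t • w))
      (by fun_prop) (by fun_prop) zero_le_one
    linarith [pow_le_pow_left₀ (abs_nonneg _) habs 2]

end CellEstimates

end Curvature

section Interpolation

open MeasureTheory Set Function
open scoped RealInnerProductSpace

variable {P : Type*} [NormedAddCommGroup P] [NormedSpace ℝ P] [MeasurableSpace P] [BorelSpace P]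
  {E : Type*} [NormedAddCommGroup E] [InnerProductSpace ℝ E] {J : E →ₗᵢ[ℝ] E} {σ : P → E}

theorem pi_sq_le_integral_norm_covDeriv_sq_of_sheared (hJ : ∀ x, J (J x) = -x)
    (hσ : ContDiff ℝ 2 σ) (hunit : ∀ p, ‖σ p‖ = 1) {v w : P} (hv : Periodic σ v)
    (hw : Antiperiodic σ w) (hmeanv : ∫ p, connectionForm J σ v p ∂cellMeasure v w = 0)
    (hmeanw : ∫ p, connectionForm J σ w p ∂cellMeasure v w = 0) (n : ℤ) :
    Real.pi ^ 2 ≤ ∫ p, (‖covDeriv J σ w p - (n : ℝ) • covDeriv J σ v p‖ ^ 2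
      + 25 / 16 * ‖covDeriv J σ v p‖ ^ 2) ∂cellMeasure v w := by
  have hX := continuous_covDeriv (J := J) (hσ.of_le one_le_two) v
  have hW := continuous_covDeriv (J := J) (hσ.of_le one_le_two) w
  have hA (u : P) := (contDiff_connectionForm (J := J) hσ u).continuous
  have hshear : Antiperiodic σ (w + (-(n : ℝ)) • v) := by
    rw [neg_smul, Int.cast_smul_eq_zsmul, ← sub_eq_add_neg]
    exact fun p => by rw [← add_sub_assoc, hv.sub_zsmul_eq, hw]
  have hcov (p : P) : covDeriv J σ (w + (-(n : ℝ)) • v) p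
      = covDeriv J σ w p - (n : ℝ) • covDeriv J σ v p := by
    simpa [sub_eq_add_neg] using covDeriv_smul_add_smul (J := J) (σ := σ) 1 (-(n : ℝ)) w v p
  have hform (p : P) : connectionForm J σ (w + (-(n : ℝ)) • v) p
      = connectionForm J σ w p - n * connectionForm J σ v p := by
    simpa [sub_eq_add_neg] using connectionForm_smul_add_smul (J := J) (σ := σ) 1 (-(n : ℝ)) w v p
  have hbound := pi_sq_le_integral_norm_covDeriv_sq hJ hσ hunit hv hshear (by
    rw [integral_cellMeasure_add_smul (hA _) (periodic_connectionForm hv _)]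
    simp only [hform]
    rw [integral_sub (integrable_cellMeasure (hA w) v w)
      ((integrable_cellMeasure (hA v) v w).const_mul _), integral_const_mul, hmeanw, hmeanv]
    simp)
  simp only [hcov] at hbound
  rwa [integral_cellMeasure_add_smul (by fun_prop) fun p => by
    simp only [periodic_covDeriv hv _ p]] at hbound

theorem integral_connectionForm_smul_add_smul_eq_zero (hσ : ContDiff ℝ 2 σ) {v e v' w' : P}
    {a b : ℝ} (hmeanv : ∫ p, connectionForm J σ v p ∂cellMeasure v' w' = 0)
    (hmeane : ∫ p, connectionForm J σ e p ∂cellMeasure v' w' = 0) :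
    ∫ p, connectionForm J σ (a • v + b • e) p ∂cellMeasure v' w' = 0 := by
  have hA (u : P) := integrable_cellMeasure (contDiff_connectionForm (J := J) hσ u).continuous v' w'
  simp only [connectionForm_smul_add_smul]
  rw [integral_add ((hA v).const_mul a) ((hA e).const_mul b), integral_const_mul,
    integral_const_mul, hmeanv, hmeane, mul_zero, mul_zero, add_zero]

/-- Averaging the two integer shears nearest to `a` with weights `1 - α` and `α`, where `α` is the
fractional part of `a`, cancels the cross term and costs only `α * (1 - α) ≤ 1 / 4`. -/
theorem pi_sq_le_integral_norm_covDeriv_sq_of_lattice (hJ : ∀ x, J (J x) = -x)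
    (hσ : ContDiff ℝ 2 σ) (hunit : ∀ p, ‖σ p‖ = 1) {v e : P} {a b : ℝ} (hv : Periodic σ v)
    (hw : Antiperiodic σ (a • v + b • e))
    (hmeanv : ∫ p, connectionForm J σ v p ∂cellMeasure v (a • v + b • e) = 0)
    (hmeane : ∫ p, connectionForm J σ e p ∂cellMeasure v (a • v + b • e) = 0) :
    Real.pi ^ 2 ≤ ∫ p, (b ^ 2 * ‖covDeriv J σ e p‖ ^ 2 + 29 / 16 * ‖covDeriv J σ v p‖ ^ 2)
      ∂cellMeasure v (a • v + b • e) := by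
  have hX := continuous_covDeriv (J := J) (hσ.of_le one_le_two) v
  have hY := continuous_covDeriv (J := J) (hσ.of_le one_le_two) e
  have hshear := pi_sq_le_integral_norm_covDeriv_sq_of_sheared hJ hσ hunit hv hw hmeanv
    (integral_connectionForm_smul_add_smul_eq_zero hσ hmeanv hmeane)
  simp only [covDeriv_smul_add_smul] at hshear
  have hα0 := Int.fract_nonneg a
  have hα1 := (Int.fract_lt_one a).le
  have hfloor := Int.self_sub_floor a
  set α := Int.fract a
  calc Real.pi ^ 2 = (1 - α) * Real.pi ^ 2 + α * Real.pi ^ 2 := by ring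
    _ ≤ _ := add_le_add (mul_le_mul_of_nonneg_left (hshear ⌊a⌋) (sub_nonneg.2 hα1))
      (mul_le_mul_of_nonneg_left (hshear (⌊a⌋ + 1)) hα0)
    _ ≤ _ := by
      rw [← integral_const_mul, ← integral_const_mul,
        ← integral_add (integrable_cellMeasure (by fun_prop) _ _)
          (integrable_cellMeasure (by fun_prop) _ _)]
      refine integral_mono (integrable_cellMeasure (by fun_prop) _ _)
        (integrable_cellMeasure (by fun_prop) _ _) fun p => ?_
      have hexpand (m : ℝ) :
          ‖a • covDeriv J σ v p + b • covDeriv J σ e p - m • covDeriv J σ v p‖ ^ 2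
          = (a - m) ^ 2 * ‖covDeriv J σ v p‖ ^ 2
            + 2 * ((a - m) * b) * ⟪covDeriv J σ v p, covDeriv J σ e p⟫
            + b ^ 2 * ‖covDeriv J σ e p‖ ^ 2 := by
        rw [add_sub_right_comm, ← sub_smul, norm_add_sq_real, real_inner_smul_left,
          real_inner_smul_right, norm_smul, norm_smul, mul_pow, mul_pow, Real.norm_eq_abs,
          Real.norm_eq_abs, sq_abs, sq_abs]
        ring
      have hnext : a - (⌊a⌋ + 1 : ℤ) = α - 1 := by
        push_cast
        linarith
      dsimp only
      rw [hexpand, hexpand, hfloor, hnext]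
      nlinarith [mul_nonneg (sq_nonneg (2 * α - 1)) (sq_nonneg ‖covDeriv J σ v p‖)]

theorem pi_le_of_integral_norm_covDeriv_sq_le (hJ : ∀ x, J (J x) = -x) (hσ : ContDiff ℝ 2 σ)
    (hunit : ∀ p, ‖σ p‖ = 1) {v e : P} {a b : ℝ} (hb : 0 ≤ b) (hv : Periodic σ v)
    (hw : Antiperiodic σ (a • v + b • e))
    (hmeanv : ∫ p, connectionForm J σ v p ∂cellMeasure v (a • v + b • e) = 0)
    (hmeane : ∫ p, connectionForm J σ e p ∂cellMeasure v (a • v + b • e) = 0)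
    {q : P → ℝ} (hq : Continuous q) (hYq : ∀ p, ‖covDeriv J σ e p‖ ≤ q p + ‖covDeriv J σ v p‖)
    {δ κ : ℝ} (hδ : ∫ p, ‖covDeriv J σ v p‖ ^ 2 ∂cellMeasure v (a • v + b • e) ≤ δ)
    (hκ : ∫ p, ‖covDeriv J σ e p‖ ^ 2 ∂cellMeasure v (a • v + b • e) ≤ κ) :
    Real.pi ≤ b * ∫ p, q p ∂cellMeasure v (a • v + b • e)
      + (|a| + b) * √δ + |a| * δ + b * √(δ * κ) := by
  have hX := continuous_covDeriv (J := J) (hσ.of_le one_le_two) v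
  have hY := continuous_covDeriv (J := J) (hσ.of_le one_le_two) e
  have hbound := pi_le_integral_norm_covDeriv_add_integral_mul hJ hσ hunit hv hw
    (integral_connectionForm_smul_add_smul_eq_zero hσ hmeanv hmeane)
  have hW (p : P) : ‖covDeriv J σ (a • v + b • e) p‖
      ≤ |a| * ‖covDeriv J σ v p‖ + b * ‖covDeriv J σ e p‖ := by
    rw [covDeriv_smul_add_smul]
    refine (norm_add_le _ _).trans_eq ?_
    rw [norm_smul, norm_smul, Real.norm_eq_abs, Real.norm_of_nonneg hb]
  have hW' := continuous_covDeriv (J := J) (hσ.of_le one_le_two) (a • v + b • e)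
  have hXδ : ∫ p, ‖covDeriv J σ v p‖ ∂cellMeasure v (a • v + b • e) ≤ √δ := by
    simpa using integral_cellMeasure_mul_le_sqrt hX.norm (continuous_const (y := (1 : ℝ))) hδ
      (B := 1) (by simp)
  have hXY := integral_cellMeasure_mul_le_sqrt hX.norm hY.norm hδ hκ
  generalize hμ : cellMeasure v (a • v + b • e) = μ at *
  have hint {f : P → ℝ} (hf : Continuous f) : Integrable f μ := hμ ▸ integrable_cellMeasure hf _ _
  calc Real.pi ≤ _ := hbound
    _ ≤ ∫ p, (b * q p + (|a| + b) * ‖covDeriv J σ v p‖ + |a| * ‖covDeriv J σ v p‖ ^ 2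
          + b * (‖covDeriv J σ v p‖ * ‖covDeriv J σ e p‖)) ∂μ := by
      rw [← integral_add (hint (by fun_prop)) (hint (by fun_prop))]
      refine integral_mono (hint (by fun_prop)) (hint (by fun_prop)) fun p => ?_
      dsimp only
      nlinarith [hW p, mul_le_mul_of_nonneg_left (hYq p) hb,
        mul_le_mul_of_nonneg_left (hW p) (norm_nonneg (covDeriv J σ v p))]
    _ = b * ∫ p, q p ∂μ + (|a| + b) * ∫ p, ‖covDeriv J σ v p‖ ∂μ
          + |a| * ∫ p, ‖covDeriv J σ v p‖ ^ 2 ∂μ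
          + b * ∫ p, ‖covDeriv J σ v p‖ * ‖covDeriv J σ e p‖ ∂μ := by
      rw [integral_add (hint (by fun_prop)) (hint (by fun_prop)),
        integral_add (hint (by fun_prop)) (hint (by fun_prop)),
        integral_add (hint (by fun_prop)) (hint (by fun_prop))]
      simp only [integral_const_mul]
    _ ≤ _ := by gcongr

end Interpolation

section DirectionalDbar

open MeasureTheory Set Function NormedSpace
open scoped RealInnerProductSpace

variable {P : Type*} [NormedAddCommGroup P] [NormedSpace ℝ P]
  {E : Type*} [NormedAddCommGroup E] [InnerProductSpace ℝ E]

/-- The second-order operator `∂ᵥ² + ∂ₑ²`. -/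
noncomputable def laplacianAlong (v e : P) (f : P → ℝ) (p : P) : ℝ :=
  fderiv ℝ (fun q => fderiv ℝ f q v) p v + fderiv ℝ (fun q => fderiv ℝ f q e) p e

/-- The Cauchy–Riemann operator `∂ᵥ + J ∂ₑ`, where `J` plays the role of multiplication by `i`. -/
noncomputable def dbar (J : E →ₗᵢ[ℝ] E) (v e : P) (Φ : P → E) (p : P) : E :=
  fderiv ℝ Φ p v + J (fderiv ℝ Φ p e)

/-- Pointwise orthogonality of `dbar J v e Φ` to the `J`-complex line spanned by `Φ`. -/
def IsDbarOrthogonal (J : E →ₗᵢ[ℝ] E) (v e : P) (Φ : P → E) : Prop :=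
  ∀ p, ⟪Φ p, dbar J v e Φ p⟫ = 0 ∧ ⟪J (Φ p), dbar J v e Φ p⟫ = 0

variable {J : E →ₗᵢ[ℝ] E} {Φ : P → E} {v e : P}

theorem continuous_laplacianAlong {f : P → ℝ} (hf : ContDiff ℝ 2 f) (v e : P) :
    Continuous (laplacianAlong v e f) :=
  (continuous_fderiv_apply_const (contDiff_fderiv_apply_const hf v) v).add
    (continuous_fderiv_apply_const (contDiff_fderiv_apply_const hf e) e)

theorem contDiff_normalize {n : WithTop ℕ∞} (hΦ : ContDiff ℝ n Φ) (hΦ0 : ∀ p, Φ p ≠ 0) :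
    ContDiff ℝ n fun p => normalize (Φ p) :=
  ((hΦ.norm ℝ hΦ0).inv fun p => norm_ne_zero_iff.2 (hΦ0 p)).smul hΦ

theorem contDiff_log_norm {n : WithTop ℕ∞} (hΦ : ContDiff ℝ n Φ) (hΦ0 : ∀ p, Φ p ≠ 0) :
    ContDiff ℝ n fun p => Real.log ‖Φ p‖ :=
  (hΦ.norm ℝ hΦ0).log fun p => norm_ne_zero_iff.2 (hΦ0 p)

theorem fderiv_eq_norm_smul_add (hΦ : ContDiff ℝ 1 Φ) (hΦ0 : ∀ p, Φ p ≠ 0) (p u : P) :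
    fderiv ℝ Φ p u = ‖Φ p‖ • (fderiv ℝ (fun q => Real.log ‖Φ q‖) p u • normalize (Φ p)
      + fderiv ℝ (fun q => normalize (Φ q)) p u) := by
  have hnorm := (hΦ.norm ℝ hΦ0).differentiable one_ne_zero p
  have hΦp := norm_ne_zero_iff.2 (hΦ0 p)
  have hpolar : Φ = fun q => ‖Φ q‖ • normalize (Φ q) :=
    funext fun q => (norm_smul_normalize _).symm
  conv_lhs => rw [hpolar, fderiv_fun_smul hnorm
    ((contDiff_normalize hΦ hΦ0).differentiable one_ne_zero p)]
  rw [fderiv.log hnorm hΦp, smul_add, smul_smul, add_comm]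
  simp [mul_inv_cancel_left₀ hΦp]

theorem continuous_dbar (hΦ : ContDiff ℝ 1 Φ) : Continuous (dbar J v e Φ) :=
  (continuous_fderiv_apply_const hΦ v).add
    (J.continuous.comp (continuous_fderiv_apply_const hΦ e))

theorem continuous_norm_dbar_div_norm (hΦ : ContDiff ℝ 1 Φ) (hΦ0 : ∀ p, Φ p ≠ 0) :
    Continuous fun p => ‖dbar J v e Φ p‖ / ‖Φ p‖ :=
  (continuous_dbar hΦ).norm.div hΦ.continuous.norm fun p => norm_ne_zero_iff.2 (hΦ0 p)

section ComplexStructure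

variable (hJ : ∀ x, J (J x) = -x)
include hJ

theorem dbar_eq_norm_smul_add (hΦ : ContDiff ℝ 1 Φ) (hΦ0 : ∀ p, Φ p ≠ 0) (p : P) :
    dbar J v e Φ p = ‖Φ p‖ • (
      (fderiv ℝ (fun q => Real.log ‖Φ q‖) p v
        - connectionForm J (fun q => normalize (Φ q)) e p) • normalize (Φ p)
      + (fderiv ℝ (fun q => Real.log ‖Φ q‖) p e
        + connectionForm J (fun q => normalize (Φ q)) v p) • J (normalize (Φ p))
      + (covDeriv J (fun q => normalize (Φ q)) v p
        + J (covDeriv J (fun q => normalize (Φ q)) e p))) := by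
  rw [dbar, fderiv_eq_norm_smul_add hΦ hΦ0, fderiv_eq_norm_smul_add hΦ hΦ0, covDeriv_eq,
    covDeriv_eq]
  simp only [map_smul, map_add, map_sub, hJ]
  module

/-- In polar form `Φ = ‖Φ‖ σ`, the equation says that the connection form of `σ` is conjugate to
`d log ‖Φ‖`. -/
theorem fderiv_log_norm_eq_connectionForm (hΦ : ContDiff ℝ 1 Φ) (hΦ0 : ∀ p, Φ p ≠ 0)
    (horth : IsDbarOrthogonal J v e Φ) (p : P) :
    fderiv ℝ (fun q => Real.log ‖Φ q‖) p v = connectionForm J (fun q => normalize (Φ q)) e p ∧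
      fderiv ℝ (fun q => Real.log ‖Φ q‖) p e
        = -connectionForm J (fun q => normalize (Φ q)) v p := by
  have hσ := contDiff_normalize hΦ hΦ0
  have hunit : ∀ q, ‖normalize (Φ q)‖ = 1 := fun q => norm_normalize_eq_one_iff.2 (hΦ0 q)
  have hΦp := norm_ne_zero_iff.2 (hΦ0 p)
  obtain ⟨hre, him⟩ := horth p
  have hre' : ⟪normalize (Φ p), dbar J v e Φ p⟫ = 0 := by
    rw [NormedSpace.normalize, real_inner_smul_left, hre, mul_zero]
  have him' : ⟪J (normalize (Φ p)), dbar J v e Φ p⟫ = 0 := by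
    rw [NormedSpace.normalize, map_smul, real_inner_smul_left, him, mul_zero]
  have hself : ⟪normalize (Φ p), J (normalize (Φ p))⟫ = 0 := by
    rw [real_inner_comm, inner_complexStructure_self hJ]
  have hcov (u : P) : ⟪normalize (Φ p), covDeriv J (fun q => normalize (Φ q)) u p⟫ = 0 :=
    inner_covDeriv_eq_zero hJ (hσ.differentiable one_ne_zero) hunit u p
  have hcovJ (u : P) : ⟪J (normalize (Φ p)), covDeriv J (fun q => normalize (Φ q)) u p⟫ = 0 :=
    inner_complexStructure_horizontal (hunit p) _
  have hcovJ' (u : P) : ⟪normalize (Φ p), J (covDeriv J (fun q => normalize (Φ q)) u p)⟫ = 0 := by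
    rw [← neg_eq_zero, ← inner_complexStructure_left hJ, hcovJ]
  rw [dbar_eq_norm_smul_add hJ hΦ hΦ0, real_inner_smul_right, mul_eq_zero, or_iff_right hΦp]
    at hre' him'
  simp only [inner_add_right, real_inner_smul_right, J.inner_map_map, hself,
    inner_complexStructure_self hJ, real_inner_self_eq_norm_sq, hunit, hcov, hcovJ, hcovJ']
    at hre' him'
  constructor <;> linarith

theorem dbar_eq_norm_smul_covDeriv_add (hΦ : ContDiff ℝ 1 Φ) (hΦ0 : ∀ p, Φ p ≠ 0)
    (horth : IsDbarOrthogonal J v e Φ) (p : P) :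
    dbar J v e Φ p = ‖Φ p‖ • (covDeriv J (fun q => normalize (Φ q)) v p
      + J (covDeriv J (fun q => normalize (Φ q)) e p)) := by
  obtain ⟨hv, he⟩ := fderiv_log_norm_eq_connectionForm hJ hΦ hΦ0 horth p
  rw [dbar_eq_norm_smul_add hJ hΦ hΦ0, hv, he]
  module

theorem laplacianAlong_log_norm (hΦ : ContDiff ℝ 2 Φ) (hΦ0 : ∀ p, Φ p ≠ 0)
    (horth : IsDbarOrthogonal J v e Φ) (p : P) :
    laplacianAlong v e (fun q => Real.log ‖Φ q‖) p
      = ‖covDeriv J (fun q => normalize (Φ q)) v p‖ ^ 2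
        + ‖covDeriv J (fun q => normalize (Φ q)) e p‖ ^ 2 - (‖dbar J v e Φ p‖ / ‖Φ p‖) ^ 2 := by
  have hΦ1 : ContDiff ℝ 1 Φ := hΦ.of_le one_le_two
  have hσ := contDiff_normalize hΦ hΦ0
  have hunit : ∀ q, ‖normalize (Φ q)‖ = 1 := fun q => norm_normalize_eq_one_iff.2 (hΦ0 q)
  have hcurv := fderiv_connectionForm_sub_fderiv_connectionForm hJ hσ v e p
  rw [← inner_covDeriv_covDeriv hJ (hσ.differentiable two_ne_zero) hunit] at hcurv
  have hnorm : ‖dbar J v e Φ p‖ / ‖Φ p‖ = ‖covDeriv J (fun q => normalize (Φ q)) v p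
      + J (covDeriv J (fun q => normalize (Φ q)) e p)‖ := by
    rw [dbar_eq_norm_smul_covDeriv_add hJ hΦ1 hΦ0 horth, norm_smul, norm_norm,
      mul_div_cancel_left₀ _ (norm_ne_zero_iff.2 (hΦ0 p))]
  have hlog := fderiv_log_norm_eq_connectionForm hJ hΦ1 hΦ0 horth
  simp only [laplacianAlong, fun q => (hlog q).1, fun q => (hlog q).2, fderiv_fun_neg,
    neg_apply]
  rw [hnorm, norm_add_sq_real, J.norm_map,
    ← neg_eq_iff_eq_neg.2 (inner_complexStructure_left hJ _ _)]
  linarith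

end ComplexStructure

section Torus

variable [MeasurableSpace P] [BorelSpace P]

theorem integral_laplacianAlong_eq_zero {f : P → ℝ} (hf : ContDiff ℝ 2 f) {v' w' : P}
    (hspan : Submodule.span ℝ {v', w'} = ⊤) (hv : Periodic f v') (hw : Periodic f w') (v e : P) :
    ∫ p, laplacianAlong v e f p ∂cellMeasure v' w' = 0 := by
  have hdf (u : P) := contDiff_fderiv_apply_const hf u
  have hper {u : P} (hu : Periodic f u) (x : P) : Periodic (fun q => fderiv ℝ f q x) u :=
    (periodic_fderiv hu).comp fun L => L x
  have hint (u : P) := integrable_cellMeasure (continuous_fderiv_apply_const (hdf u) u) v' w'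
  simp only [laplacianAlong]
  rw [integral_add (hint v) (hint e),
    integral_cellMeasure_fderiv (hdf v) hspan (hper hv v) (hper hw v),
    integral_cellMeasure_fderiv (hdf e) hspan (hper hv e) (hper hw e), add_zero]

theorem integrable_norm_covDeriv_normalize_sq (hΦ : ContDiff ℝ 1 Φ) (hΦ0 : ∀ p, Φ p ≠ 0)
    (u v' w' : P) : Integrable (fun p => ‖covDeriv J (fun q => normalize (Φ q)) u p‖ ^ 2)
      (cellMeasure v' w') :=
  integrable_cellMeasure ((continuous_covDeriv (contDiff_normalize hΦ hΦ0) u).norm.pow 2) v' w'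

variable (hJ : ∀ x, J (J x) = -x) {a b : ℝ}
include hJ

theorem integral_connectionForm_normalize_eq_zero (hΦ : ContDiff ℝ 2 Φ) (hΦ0 : ∀ p, Φ p ≠ 0)
    (horth : IsDbarOrthogonal J v e Φ) {v' w' : P} (hspan : Submodule.span ℝ {v', w'} = ⊤)
    (hv : Periodic Φ v') (hw : Antiperiodic Φ w') :
    ∫ p, connectionForm J (fun q => normalize (Φ q)) v p ∂cellMeasure v' w' = 0 ∧
      ∫ p, connectionForm J (fun q => normalize (Φ q)) e p ∂cellMeasure v' w' = 0 := by
  have hlog := fderiv_log_norm_eq_connectionForm hJ (hΦ.of_le one_le_two) hΦ0 horth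
  have hmean := integral_cellMeasure_fderiv ((contDiff_log_norm hΦ hΦ0).of_le one_le_two) hspan
    (hv.comp fun x => Real.log ‖x‖) ((periodic_norm_of_antiperiodic hw).comp Real.log)
  have hmeane := hmean e
  have hmeanv := hmean v
  simp only [fun p => (hlog p).2, integral_neg, neg_eq_zero] at hmeane
  simp only [fun p => (hlog p).1] at hmeanv
  exact ⟨hmeane, hmeanv⟩

theorem integral_norm_covDeriv_sq_add_eq (hΦ : ContDiff ℝ 2 Φ) (hΦ0 : ∀ p, Φ p ≠ 0)
    (horth : IsDbarOrthogonal J v e Φ) {v' w' : P} (hspan : Submodule.span ℝ {v', w'} = ⊤)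
    (hv : Periodic Φ v') (hw : Antiperiodic Φ w') :
    (∫ p, ‖covDeriv J (fun q => normalize (Φ q)) v p‖ ^ 2 ∂cellMeasure v' w')
      + ∫ p, ‖covDeriv J (fun q => normalize (Φ q)) e p‖ ^ 2 ∂cellMeasure v' w'
      = ∫ p, (‖dbar J v e Φ p‖ / ‖Φ p‖) ^ 2 ∂cellMeasure v' w' := by
  have hΦ1 : ContDiff ℝ 1 Φ := hΦ.of_le one_le_two
  have hcov (u : P) := integrable_norm_covDeriv_normalize_sq (J := J) hΦ1 hΦ0 u v' w'
  have hq : Integrable (fun p => (‖dbar J v e Φ p‖ / ‖Φ p‖) ^ 2) (cellMeasure v' w') :=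
    integrable_cellMeasure ((continuous_norm_dbar_div_norm hΦ1 hΦ0).pow 2) v' w'
  have hzero := integral_laplacianAlong_eq_zero (contDiff_log_norm hΦ hΦ0) hspan
    (hv.comp fun x => Real.log ‖x‖) ((periodic_norm_of_antiperiodic hw).comp Real.log) v e
  simp only [laplacianAlong_log_norm hJ hΦ hΦ0 horth] at hzero
  rw [integral_sub (by exact (hcov v).add (hcov e)) hq, integral_add (hcov v) (hcov e)] at hzero
  linarith

theorem pi_le_of_isDbarOrthogonal (hΦ : ContDiff ℝ 2 Φ) (hΦ0 : ∀ p, Φ p ≠ 0)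
    (horth : IsDbarOrthogonal J v e Φ) (hb : 0 ≤ b) (hb2 : 29 / 16 < b ^ 2)
    (hspan : Submodule.span ℝ {v, a • v + b • e} = ⊤)
    (hv : Periodic Φ v) (hw : Antiperiodic Φ (a • v + b • e)) {κ : ℝ}
    (hκ : ∫ p, (‖dbar J v e Φ p‖ / ‖Φ p‖) ^ 2 ∂cellMeasure v (a • v + b • e) ≤ κ) :
    Real.pi ≤ b * (∫ p, ‖dbar J v e Φ p‖ / ‖Φ p‖ ∂cellMeasure v (a • v + b • e))
      + (|a| + b) * √((b ^ 2 * κ - Real.pi ^ 2) / (b ^ 2 - 29 / 16))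
      + |a| * ((b ^ 2 * κ - Real.pi ^ 2) / (b ^ 2 - 29 / 16))
      + b * √((b ^ 2 * κ - Real.pi ^ 2) / (b ^ 2 - 29 / 16) * κ) := by
  have hΦ1 : ContDiff ℝ 1 Φ := hΦ.of_le one_le_two
  have hσ := contDiff_normalize hΦ hΦ0
  have hunit : ∀ q, ‖normalize (Φ q)‖ = 1 := fun q => norm_normalize_eq_one_iff.2 (hΦ0 q)
  have hσv : Periodic (fun p => normalize (Φ p)) v := hv.comp normalize
  have hσw : Antiperiodic (fun p => normalize (Φ p)) (a • v + b • e) := fun p => by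
    simp only [hw p, normalize_neg]
  have hcov (u : P) := integrable_norm_covDeriv_normalize_sq (J := J) hΦ1 hΦ0 u v (a • v + b • e)
  obtain ⟨hmeanv, hmeane⟩ := integral_connectionForm_normalize_eq_zero hJ hΦ hΦ0 horth hspan hv hw
  have henergy := integral_norm_covDeriv_sq_add_eq hJ hΦ hΦ0 horth hspan hv hw
  have hpi := pi_sq_le_integral_norm_covDeriv_sq_of_lattice hJ hσ hunit hσv hσw hmeanv hmeane
  rw [integral_add ((hcov e).const_mul _) ((hcov v).const_mul _), integral_const_mul,
    integral_const_mul] at hpi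
  refine pi_le_of_integral_norm_covDeriv_sq_le hJ hσ hunit hb hσv hσw hmeanv hmeane
    (continuous_norm_dbar_div_norm hΦ1 hΦ0) (fun p => ?_) ?_ ?_
  · rw [dbar_eq_norm_smul_covDeriv_add hJ hΦ1 hΦ0 horth, norm_smul, norm_norm,
      mul_div_cancel_left₀ _ (norm_ne_zero_iff.2 (hΦ0 p)), ← J.norm_map (covDeriv J _ e p)]
    exact norm_le_add_norm_add' _ _
  · rw [le_div_iff₀ (sub_pos.2 hb2)]
    nlinarith [mul_le_mul_of_nonneg_left hκ (sq_nonneg b)]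
  · have hnonneg : 0 ≤ ∫ p, ‖covDeriv J (fun q => normalize (Φ q)) v p‖ ^ 2
        ∂cellMeasure v (a • v + b • e) := integral_nonneg fun p => sq_nonneg _
    linarith

end Torus

end DirectionalDbar

section LogarithmicPotential

open MeasureTheory Set Function Filter Topology

theorem abs_sub_integral_le_half_integral_abs_deriv {g g' : ℝ → ℝ}
    (hd : ∀ s, HasDerivAt g (g' s) s) (hc : Continuous g') (hper : g 1 = g 0) {s : ℝ}
    (hs : s ∈ Icc (0 : ℝ) 1) :
    |g s - ∫ x in (0 : ℝ)..1, g x| ≤ (∫ x in (0 : ℝ)..1, |g' x|) / 2 := by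
  have hg : Continuous g := continuous_iff_continuousAt.2 fun s => (hd s).continuousAt
  simpa using sub_mul_abs_le_half_integral_abs_deriv
    (fun s => (hd s).sub_const (∫ x in (0 : ℝ)..1, g x)) hc (by rw [hper])
    (by simp [intervalIntegral.integral_sub (hg.intervalIntegrable 0 1)]) hs

variable {P : Type*} [NormedAddCommGroup P] [NormedSpace ℝ P]

theorem laplacianAlong_log {F : P → ℝ} (hF : ContDiff ℝ 2 F) (hF0 : ∀ p, F p ≠ 0) (v e p : P) :
    laplacianAlong v e (fun q => Real.log (F q)) p = laplacianAlong v e F p / F p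
      - (fderiv ℝ (fun q => Real.log (F q)) p v ^ 2
        + fderiv ℝ (fun q => Real.log (F q)) p e ^ 2) := by
  have hFd := hF.differentiable two_ne_zero
  have hlog (u : P) : (fun q => fderiv ℝ (fun q => Real.log (F q)) q u)
      = fun q => (F q)⁻¹ * fderiv ℝ F q u := funext fun q => by
    rw [fderiv.log (hFd q) (hF0 q)]
    rfl
  have hsecond (u : P) : fderiv ℝ (fun q => (F q)⁻¹ * fderiv ℝ F q u) p u
      = fderiv ℝ (fun q => fderiv ℝ F q u) p u / F p - ((F p)⁻¹ * fderiv ℝ F p u) ^ 2 := by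
    have hinv : HasFDerivAt (fun q => (F q)⁻¹) (-(F p ^ 2)⁻¹ • fderiv ℝ F p) p :=
      (hasDerivAt_inv (hF0 p)).comp_hasFDerivAt p (hFd p).hasFDerivAt
    have hmul : HasFDerivAt (fun q => (F q)⁻¹ * fderiv ℝ F q u) _ p :=
      hinv.mul ((contDiff_fderiv_apply_const hF u).differentiable one_ne_zero p).hasFDerivAt
    rw [hmul.fderiv]
    simp only [neg_smul, smul_neg, add_apply, smul_apply, smul_eq_mul, neg_apply]
    field_simp
    ring
  simp only [laplacianAlong, hlog, hsecond, fun u => congrFun (hlog u) p]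
  ring

theorem laplacianAlong_const_sub (c : ℝ) (f : P → ℝ) (v e p : P) :
    laplacianAlong v e (fun q => c - f q) p = -laplacianAlong v e f p := by
  simp only [laplacianAlong, fderiv_const_sub, neg_apply, fderiv_fun_neg, neg_add]

variable [MeasurableSpace P] [BorelSpace P]

theorem abs_sub_integral_cellMeasure_le {f : P → ℝ} (hf : ContDiff ℝ 1 f) {v w : P}
    (hv : Periodic f v) (hw : Periodic f w) {s t : ℝ} (hs : s ∈ Icc (0 : ℝ) 1)
    (ht : t ∈ Icc (0 : ℝ) 1) :
    |f (s • v + t • w) - ∫ q, f q ∂cellMeasure v w|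
      ≤ (∫ x in (0 : ℝ)..1, |fderiv ℝ f (x • v + t • w) v|) / 2
        + (∫ p, |fderiv ℝ f p w| ∂cellMeasure v w) / 2 := by
  have hcont (u : P) := continuous_fderiv_apply_const hf u
  have hfc : Continuous f := hf.continuous
  have hderiv (y x : ℝ) : HasDerivAt (fun y => f (x • v + y • w))
      (fderiv ℝ f (x • v + y • w) w) y := by
    simpa only [add_comm (x • v)] using
      hasDerivAt_comp_smul_add (hf.differentiable one_ne_zero) w (x • v) y
  have hmean (y : ℝ) : HasDerivAt (fun y => ∫ x in (0 : ℝ)..1, f (x • v + y • w))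
      (∫ x in (0 : ℝ)..1, fderiv ℝ f (x • v + y • w) w) y :=
    hasDerivAt_intervalIntegral_of_continuous_deriv hderiv (by fun_prop)
      (by exact (hcont w).comp (by fun_prop)) y
  have hhorizontal := abs_sub_integral_le_half_integral_abs_deriv
    (hasDerivAt_comp_smul_add (hf.differentiable one_ne_zero) v (t • w)) (by fun_prop)
    (by simpa [add_comm] using hv (t • w)) hs
  have hslice' : Continuous fun y : ℝ => ∫ x in (0 : ℝ)..1, fderiv ℝ f (x • v + y • w) w :=
    intervalIntegral.continuous_parametric_intervalIntegral_of_continuous'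
      (by exact (hcont w).comp (by fun_prop)) _ _
  have hvertical := abs_sub_integral_le_half_integral_abs_deriv hmean hslice'
    (by simp [hw _]) ht
  have hle : ∫ y in (0 : ℝ)..1, |∫ x in (0 : ℝ)..1, fderiv ℝ f (x • v + y • w) w|
      ≤ ∫ p, |fderiv ℝ f p w| ∂cellMeasure v w := by
    rw [integral_cellMeasure_swap (hcont w).abs]
    exact intervalIntegral.integral_mono_on zero_le_one (hslice'.abs.intervalIntegrable _ _)
      ((intervalIntegral.continuous_parametric_intervalIntegral_of_continuous'
        (by exact (hcont w).abs.comp (by fun_prop)) _ _).intervalIntegrable _ _)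
      fun y _ => intervalIntegral.abs_integral_le_integral_abs zero_le_one
  rw [← integral_cellMeasure_swap hfc] at hvertical
  refine (abs_sub_le _ _ _).trans (add_le_add hhorizontal (hvertical.trans ?_))
  gcongr

theorem integral_abs_sub_integral_le {f : P → ℝ} (hf : ContDiff ℝ 1 f) {v w : P}
    (hv : Periodic f v) (hw : Periodic f w) :
    ∫ p, |f p - ∫ q, f q ∂cellMeasure v w| ∂cellMeasure v w
      ≤ (∫ p, |fderiv ℝ f p v| ∂cellMeasure v w) / 2
        + (∫ p, |fderiv ℝ f p w| ∂cellMeasure v w) / 2 := by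
  have hcont (u : P) := continuous_fderiv_apply_const hf u
  have hfc : Continuous f := hf.continuous
  have hosc : Continuous fun p => |f p - ∫ q, f q ∂cellMeasure v w| := by fun_prop
  have hslice {g : P → ℝ} (hg : Continuous g) :
      Continuous fun t : ℝ => ∫ s in (0 : ℝ)..1, g (s • v + t • w) :=
    intervalIntegral.continuous_parametric_intervalIntegral_of_continuous'
      (by exact hg.comp (by fun_prop)) _ _
  have hhalf : IntervalIntegrable
      (fun t => (∫ s in (0 : ℝ)..1, |fderiv ℝ f (s • v + t • w) v|) / 2) volume 0 1 :=
    ((hslice (hcont v).abs).div_const 2).intervalIntegrable _ _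
  calc ∫ p, |f p - ∫ q, f q ∂cellMeasure v w| ∂cellMeasure v w
      = ∫ t in (0 : ℝ)..1, ∫ s in (0 : ℝ)..1,
          |f (s • v + t • w) - ∫ q, f q ∂cellMeasure v w| := integral_cellMeasure_swap hosc v w
    _ ≤ ∫ t in (0 : ℝ)..1, ((∫ s in (0 : ℝ)..1, |fderiv ℝ f (s • v + t • w) v|) / 2
          + (∫ p, |fderiv ℝ f p w| ∂cellMeasure v w) / 2) := by
      refine intervalIntegral.integral_mono_on zero_le_one ((hslice hosc).intervalIntegrable _ _)
        (hhalf.add intervalIntegrable_const) fun t ht => ?_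
      refine (intervalIntegral.integral_mono_on zero_le_one
        ((hosc.comp (by fun_prop)).intervalIntegrable _ _) intervalIntegrable_const
        fun s hs => abs_sub_integral_cellMeasure_le hf hv hw hs ht).trans_eq ?_
      simp
    _ = _ := by
      rw [intervalIntegral.integral_add hhalf intervalIntegrable_const,
        intervalIntegral.integral_div, ← integral_cellMeasure_swap (hcont v).abs]
      simp

theorem integral_fderiv_log_sq_le {F : P → ℝ} (hF : ContDiff ℝ 2 F) (hF1 : ∀ p, 1 ≤ F p)
    {v' w' : P} (hspan : Submodule.span ℝ {v', w'} = ⊤) (hv : Periodic F v') (hw : Periodic F w')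
    {v e : P} {K : ℝ} (hK : 0 ≤ K) (hΔ : ∀ p, laplacianAlong v e F p ≤ K) :
    ∫ p, (fderiv ℝ (fun q => Real.log (F q)) p v ^ 2
      + fderiv ℝ (fun q => Real.log (F q)) p e ^ 2) ∂cellMeasure v' w' ≤ K := by
  have hF0 (p : P) : F p ≠ 0 := (zero_lt_one.trans_le (hF1 p)).ne'
  have hlog : ContDiff ℝ 2 fun q => Real.log (F q) := hF.log hF0
  have hcont (u : P) := continuous_fderiv_apply_const (hlog.of_le one_le_two) u
  have hgrad := integrable_cellMeasure (((hcont v).pow 2).add ((hcont e).pow 2)) v' w'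
  have hzero := integral_laplacianAlong_eq_zero hlog hspan (hv.comp Real.log) (hw.comp Real.log) v e
  have hle (p : P) : fderiv ℝ (fun q => Real.log (F q)) p v ^ 2
      + fderiv ℝ (fun q => Real.log (F q)) p e ^ 2
      ≤ K - laplacianAlong v e (fun q => Real.log (F q)) p := by
    have : laplacianAlong v e F p / F p ≤ K :=
      (div_le_div_of_nonneg_right (hΔ p) (zero_le_one.trans (hF1 p))).trans
        (div_le_self hK (hF1 p))
    rw [laplacianAlong_log hF hF0]
    linarith
  have hlap := integrable_cellMeasure (continuous_laplacianAlong hlog v e) v' w'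
  refine (integral_mono hgrad ((integrable_const K).sub hlap) hle).trans_eq ?_
  rw [integral_sub' (integrable_const K) hlap, hzero]
  simp

theorem integral_abs_fderiv_log_le {F : P → ℝ} (hF : ContDiff ℝ 2 F) (hF1 : ∀ p, 1 ≤ F p)
    {v' w' : P} (hspan : Submodule.span ℝ {v', w'} = ⊤) (hv : Periodic F v') (hw : Periodic F w')
    {v e : P} {K : ℝ} (hK : 0 ≤ K) (hΔ : ∀ p, laplacianAlong v e F p ≤ K) :
    ∫ p, |fderiv ℝ (fun q => Real.log (F q)) p v| ∂cellMeasure v' w' ≤ √K ∧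
      ∫ p, |fderiv ℝ (fun q => Real.log (F q)) p e| ∂cellMeasure v' w' ≤ √K := by
  have hlog : ContDiff ℝ 1 fun q => Real.log (F q) :=
    (hF.log fun p => (zero_lt_one.trans_le (hF1 p)).ne').of_le one_le_two
  have hcont (u : P) := continuous_fderiv_apply_const hlog u
  have hle := integral_fderiv_log_sq_le hF hF1 hspan hv hw hK hΔ
  rw [integral_add (by exact integrable_cellMeasure ((hcont v).pow 2) v' w')
    (by exact integrable_cellMeasure ((hcont e).pow 2) v' w')] at hle
  have hsq (u : P) : 0 ≤ ∫ p, fderiv ℝ (fun q => Real.log (F q)) p u ^ 2 ∂cellMeasure v' w' :=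
    integral_nonneg fun p => sq_nonneg _
  have hcauchy (u : P)
      (hu : ∫ p, fderiv ℝ (fun q => Real.log (F q)) p u ^ 2 ∂cellMeasure v' w' ≤ K) :
      ∫ p, |fderiv ℝ (fun q => Real.log (F q)) p u| ∂cellMeasure v' w' ≤ √K := by
    simpa using integral_cellMeasure_mul_le_sqrt (hcont u).abs (continuous_const (y := (1 : ℝ)))
      (by simpa only [sq_abs] using hu) (B := 1) (by simp)
  exact ⟨hcauchy v (by linarith [hsq e]), hcauchy e (by linarith [hsq v])⟩

theorem integral_abs_log_sub_integral_log_le {F : P → ℝ} (hF : ContDiff ℝ 2 F)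
    (hF1 : ∀ p, 1 ≤ F p) {v e : P} {a b : ℝ}
    (hspan : Submodule.span ℝ {v, a • v + b • e} = ⊤) (hv : Periodic F v)
    (hw : Periodic F (a • v + b • e)) {K : ℝ} (hK : 0 ≤ K)
    (hΔ : ∀ p, laplacianAlong v e F p ≤ K) :
    ∫ p, |Real.log (F p) - ∫ q, Real.log (F q) ∂cellMeasure v (a • v + b • e)|
      ∂cellMeasure v (a • v + b • e) ≤ (1 + |a| + |b|) / 2 * √K := by
  have hlog : ContDiff ℝ 1 fun q => Real.log (F q) :=
    (hF.log fun p => (zero_lt_one.trans_le (hF1 p)).ne').of_le one_le_two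
  have hint (u : P) := integrable_cellMeasure (continuous_fderiv_apply_const hlog u).abs v
    (a • v + b • e)
  obtain ⟨hdv, hde⟩ := integral_abs_fderiv_log_le hF hF1 hspan hv hw hK hΔ
  have hdw : ∫ p, |fderiv ℝ (fun q => Real.log (F q)) p (a • v + b • e)|
      ∂cellMeasure v (a • v + b • e) ≤ |a| * √K + |b| * √K := by
    refine (integral_mono (hint _) (((hint v).const_mul |a|).add ((hint e).const_mul |b|))
      fun p => ?_).trans ?_
    · simpa only [map_add, map_smul, smul_eq_mul, ← abs_mul, Pi.add_apply] using abs_add_le _ _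
    · rw [integral_add' ((hint v).const_mul |a|) ((hint e).const_mul |b|), integral_const_mul,
        integral_const_mul]
      gcongr
  have := integral_abs_sub_integral_le hlog (hv.comp Real.log) (hw.comp Real.log)
  linarith

theorem integral_mul_integral_le {ρ f : P → ℝ} (hρ : Continuous ρ) (hf : Continuous f)
    (hρ0 : ∀ p, 0 ≤ ρ p) {U : ℝ} (hρU : ∀ p, ρ p ≤ U) (v w : P) :
    (∫ p, ρ p ∂cellMeasure v w) * ∫ p, f p ∂cellMeasure v w
      ≤ ∫ p, ρ p * f p ∂cellMeasure v w
        + U * ∫ p, |f p - ∫ q, f q ∂cellMeasure v w| ∂cellMeasure v w := by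
  have hosc : Integrable (fun p => U * |f p - ∫ q, f q ∂cellMeasure v w|) (cellMeasure v w) :=
    integrable_cellMeasure (by fun_prop) v w
  have hρf : Integrable (fun p => ρ p * f p) (cellMeasure v w) :=
    integrable_cellMeasure (by fun_prop) v w
  rw [← integral_mul_const, ← integral_const_mul, ← integral_add hρf hosc]
  refine integral_mono ((integrable_cellMeasure hρ v w).mul_const _) (hρf.add hosc) fun p => ?_
  have hneg := neg_abs_le (f p - ∫ q, f q ∂cellMeasure v w)
  have hU := mul_le_mul_of_nonneg_right (hρU p) (abs_nonneg (f p - ∫ q, f q ∂cellMeasure v w))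
  have hρp := mul_le_mul_of_nonneg_left hneg (hρ0 p)
  linarith

theorem mul_log_one_add_sub_log_sqrt_le {x C δ : ℝ} (hx : 0 ≤ x) (hδ : 0 < δ)
    (hC : Real.log √(x + δ ^ 2) ≤ C) :
    x * Real.log (1 + C - Real.log √(x + δ ^ 2)) ≤ x * C + 1 := by
  have hpos : 0 < x + δ ^ 2 := by positivity
  have hlog : Real.log (1 + C - Real.log √(x + δ ^ 2)) ≤ C + (x + δ ^ 2)⁻¹ := by
    have := Real.log_le_sub_one_of_pos (by linarith : 0 < 1 + C - Real.log √(x + δ ^ 2))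
    rw [Real.log_sqrt hpos.le] at this ⊢
    linarith [Real.one_sub_inv_le_log_of_pos hpos, inv_pos.2 hpos]
  have hdiv : x * (x + δ ^ 2)⁻¹ ≤ 1 := by
    rw [← div_eq_mul_inv, div_le_one hpos]
    linarith [sq_nonneg δ]
  linarith [mul_le_mul_of_nonneg_left hlog hx]

section NodalSet

variable {u : P → ℝ} {v e : P} {a b K : ℝ}

/-- The test function is `log (1 + C - log √(u + δ²))`: its Dirichlet energy is at most `K`, and
it is bounded where `u` is large, so its mean is bounded independently of `δ`. -/
theorem exists_integral_log_one_add_sub_log_sqrt_le (hu : ContDiff ℝ 2 u) (hu0 : ∀ p, 0 ≤ u p)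
    (hne : ∃ p, u p ≠ 0) (hspan : Submodule.span ℝ {v, a • v + b • e} = ⊤) (hv : Periodic u v)
    (hw : Periodic u (a • v + b • e)) (hK : 0 ≤ K)
    (hΔ : ∀ δ > 0, ∀ p, -K ≤ laplacianAlong v e (fun q => Real.log √(u q + δ ^ 2)) p) :
    ∃ C M, 0 ≤ C ∧ ∀ δ ∈ Ioc (0 : ℝ) 1, (∀ p, Real.log √(u p + δ ^ 2) ≤ C) ∧
      ∫ p, Real.log (1 + C - Real.log √(u p + δ ^ 2)) ∂cellMeasure v (a • v + b • e) ≤ M := by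
  obtain ⟨U, hU⟩ := exists_le_of_periodic hu.continuous hspan hv hw
  have hU0 : 0 ≤ U := (hu0 0).trans (hU 0)
  have hmass : 0 < ∫ p, u p ∂cellMeasure v (a • v + b • e) :=
    (integral_nonneg hu0).lt_of_ne fun h => hne.elim fun p hp =>
      hp (eq_zero_of_integral_cellMeasure_eq_zero hu.continuous hu0 hspan hv hw h.symm p)
  have hC0 : 0 ≤ Real.log √(U + 1) := Real.log_nonneg (Real.one_le_sqrt.2 (by linarith))
  refine ⟨Real.log √(U + 1), (U * Real.log √(U + 1) + 1 + U * ((1 + |a| + |b|) / 2 * √K))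
    / ∫ p, u p ∂cellMeasure v (a • v + b • e), hC0, fun δ ⟨hδ, hδ1⟩ => ?_⟩
  have hpos (p : P) : 0 < u p + δ ^ 2 := add_pos_of_nonneg_of_pos (hu0 p) (pow_pos hδ 2)
  have hC (p : P) : Real.log √(u p + δ ^ 2) ≤ Real.log √(U + 1) :=
    Real.log_le_log (Real.sqrt_pos.2 (hpos p))
      (Real.sqrt_le_sqrt (add_le_add (hU p) (pow_le_one₀ hδ.le hδ1)))
  refine ⟨hC, ?_⟩
  set C := Real.log √(U + 1)
  have hF : ContDiff ℝ 2 fun p => 1 + C - Real.log √(u p + δ ^ 2) :=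
    contDiff_const.sub (((hu.add contDiff_const).sqrt fun p => (hpos p).ne').log
      fun p => (Real.sqrt_pos.2 (hpos p)).ne')
  have hF1 (p : P) : 1 ≤ 1 + C - Real.log √(u p + δ ^ 2) := by linarith [hC p]
  have hlogF := hF.continuous.log fun p => (zero_lt_one.trans_le (hF1 p)).ne'
  have hosc := integral_abs_log_sub_integral_log_le hF hF1 hspan
    (hv.comp fun x => 1 + C - Real.log √(x + δ ^ 2))
    (hw.comp fun x => 1 + C - Real.log √(x + δ ^ 2)) hK fun p => by
      rw [laplacianAlong_const_sub]
      exact neg_le.1 (hΔ δ hδ p)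
  have hweighted : ∫ p, u p * Real.log (1 + C - Real.log √(u p + δ ^ 2))
      ∂cellMeasure v (a • v + b • e) ≤ U * C + 1 :=
    (integral_mono (integrable_cellMeasure (hu.continuous.mul hlogF) _ _)
      (integrable_const (U * C + 1)) fun p =>
        (mul_log_one_add_sub_log_sqrt_le (hu0 p) hδ (hC p)).trans
          (by gcongr; exact hU p)).trans_eq (by simp)
  rw [le_div_iff₀' hmass]
  refine (integral_mul_integral_le hu.continuous hlogF hu0 hU _ _).trans ?_
  gcongr

/-- On `{u = 0}` the test function with `δ = exp (-exp N)` is at least `N`. -/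
theorem cellMeasure_real_zero_set_eq_zero (hu : ContDiff ℝ 2 u) (hu0 : ∀ p, 0 ≤ u p)
    (hne : ∃ p, u p ≠ 0) (hspan : Submodule.span ℝ {v, a • v + b • e} = ⊤) (hv : Periodic u v)
    (hw : Periodic u (a • v + b • e)) (hK : 0 ≤ K)
    (hΔ : ∀ δ > 0, ∀ p, -K ≤ laplacianAlong v e (fun q => Real.log √(u q + δ ^ 2)) p) :
    (cellMeasure v (a • v + b • e)).real {p | u p = 0} = 0 := by
  obtain ⟨C, M, hC0, hM⟩ := exists_integral_log_one_add_sub_log_sqrt_le hu hu0 hne hspan hv hw hK hΔ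
  have hmarkov (N : ℕ) : N * (cellMeasure v (a • v + b • e)).real {p | u p = 0} ≤ M := by
    obtain ⟨δ, hδ, hδ1, hlogδ⟩ : ∃ δ : ℝ, 0 < δ ∧ δ ≤ 1 ∧ Real.log δ = -Real.exp N :=
      ⟨Real.exp (-Real.exp N), Real.exp_pos _,
        Real.exp_le_one_iff.2 (neg_nonpos.2 (Real.exp_pos _).le), Real.log_exp _⟩
    obtain ⟨hC, hle⟩ := hM δ ⟨hδ, hδ1⟩
    have hF1 (p : P) : 1 ≤ 1 + C - Real.log √(u p + δ ^ 2) := by linarith [hC p]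
    have hsqrt (p : P) : √(u p + δ ^ 2) ≠ 0 :=
      (Real.sqrt_pos.2 (add_pos_of_nonneg_of_pos (hu0 p) (pow_pos hδ 2))).ne'
    have hcont : Continuous fun p => Real.log (1 + C - Real.log √(u p + δ ^ 2)) :=
      (continuous_const.sub ((hu.continuous.add continuous_const).sqrt.log hsqrt)).log
        fun p => (zero_lt_one.trans_le (hF1 p)).ne'
    have hsub : {p | u p = 0} ⊆ {p | (N : ℝ) ≤ Real.log (1 + C - Real.log √(u p + δ ^ 2))} :=
      fun p (hp : u p = 0) => by
        rw [mem_ofPred_eq, hp, zero_add, Real.sqrt_sq hδ.le, hlogδ, sub_neg_eq_add]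
        exact (Real.le_log_iff_exp_le (by positivity)).2 (by linarith)
    exact (mul_le_mul_of_nonneg_left (measureReal_mono hsub) N.cast_nonneg).trans
      ((mul_meas_ge_le_integral_of_nonneg
        (Eventually.of_forall fun p => Real.log_nonneg (hF1 p))
        (integrable_cellMeasure hcont _ _) N).trans hle)
  by_contra hzero
  obtain ⟨N, hN⟩ := exists_nat_gt (M / (cellMeasure v (a • v + b • e)).real {p | u p = 0})
  rw [div_lt_iff₀ (measureReal_nonneg.lt_of_ne' hzero)] at hN
  exact hN.not_ge (hmarkov N)

end NodalSet

theorem tendsto_integral_sq_div_add_sq {X : Type*} [MeasurableSpace X] {μ : Measure X}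
    [IsFiniteMeasure μ] {u : X → ℝ} (hu : Measurable u) (hu0 : ∀ x, 0 ≤ u x)
    (hzero : μ.real {x | u x = 0} = 0) :
    Tendsto (fun δ : ℝ => ∫ x, δ ^ 2 / (u x + δ ^ 2) ∂μ) (𝓝[>] 0) (𝓝 0) := by
  have hae : ∀ᵐ x ∂μ, u x ≠ 0 := by
    simpa only [ae_iff, not_not] using (measureReal_eq_zero_iff (by finiteness)).1 hzero
  rw [← integral_zero X ℝ (μ := μ)]
  refine tendsto_integral_filter_of_dominated_convergence (fun _ => 1)
    (Eventually.of_forall fun δ => (by fun_prop : Measurable _).aestronglyMeasurable)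
    (Eventually.of_forall fun δ => Eventually.of_forall fun x => ?_) (integrable_const 1) ?_
  · rw [Real.norm_of_nonneg (by have := hu0 x; positivity)]
    exact div_le_one_of_le₀ (le_add_of_nonneg_left (hu0 x)) (by have := hu0 x; positivity)
  · filter_upwards [hae] with x hx
    have hcont : ContinuousAt (fun δ : ℝ => δ ^ 2 / (u x + δ ^ 2)) 0 :=
      ContinuousAt.div (by fun_prop) (by fun_prop) (by simpa using hx)
    simpa using hcont.tendsto.mono_left nhdsWithin_le_nhds

end LogarithmicPotential

section DirectSum

open Function
open scoped RealInnerProductSpace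

/-- The map with components `Φ₁` and `Φ₂` into the Hilbert direct sum. -/
def directSum {X F₁ F₂ : Type*} (Φ₁ : X → F₁) (Φ₂ : X → F₂) (x : X) : WithLp 2 (F₁ × F₂) :=
  WithLp.toLp 2 (Φ₁ x, Φ₂ x)

theorem norm_directSum_const_smul {X F₁ F₂ : Type*} [SeminormedAddCommGroup F₁]
    [SeminormedAddCommGroup F₂] [NormedSpace ℝ F₂] {Ψ : X → F₁} {χ : X → F₂} {δ : ℝ}
    (hχ1 : ∀ x, ‖χ x‖ = 1) (x : X) : ‖directSum Ψ (δ • χ) x‖ = √(‖Ψ x‖ ^ 2 + δ ^ 2) := by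
  simp [directSum, WithLp.prod_norm_eq_of_L2, norm_smul, hχ1]

theorem directSum_const_smul_ne_zero {X F₁ F₂ : Type*} [SeminormedAddCommGroup F₁]
    [SeminormedAddCommGroup F₂] [NormedSpace ℝ F₂] {Ψ : X → F₁} {χ : X → F₂} {δ : ℝ}
    (hχ1 : ∀ x, ‖χ x‖ = 1) (hδ : 0 < δ) (x : X) : directSum Ψ (δ • χ) x ≠ 0 := fun h => by
  have hnorm := norm_directSum_const_smul (Ψ := Ψ) (δ := δ) hχ1 x
  rw [h, norm_zero, eq_comm, Real.sqrt_eq_zero (by positivity)] at hnorm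
  nlinarith [sq_nonneg ‖Ψ x‖]

theorem periodic_directSum {X F₁ F₂ : Type*} [Add X] {Φ₁ : X → F₁} {Φ₂ : X → F₂} {v : X}
    (h₁ : Periodic Φ₁ v) (h₂ : Periodic Φ₂ v) : Periodic (directSum Φ₁ Φ₂) v := fun x => by
  rw [directSum, h₁, h₂, directSum]

theorem antiperiodic_directSum {X F₁ F₂ : Type*} [Add X] [AddCommGroup F₁] [AddCommGroup F₂]
    {Φ₁ : X → F₁} {Φ₂ : X → F₂} {w : X} (h₁ : Antiperiodic Φ₁ w) (h₂ : Antiperiodic Φ₂ w) :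
    Antiperiodic (directSum Φ₁ Φ₂) w := fun x => by
  rw [directSum, h₁, h₂, directSum, ← Prod.neg_mk, WithLp.toLp_neg]

variable {P : Type*} [NormedAddCommGroup P] [NormedSpace ℝ P]
  {E₁ E₂ : Type*} [NormedAddCommGroup E₁] [InnerProductSpace ℝ E₁]
  [NormedAddCommGroup E₂] [InnerProductSpace ℝ E₂]

variable {J₁ : E₁ →ₗᵢ[ℝ] E₁} {J₂ : E₂ →ₗᵢ[ℝ] E₂} {Φ₁ : P → E₁} {Φ₂ : P → E₂} {v e : P}

theorem withLpProdMap_apply_apply (h₁ : ∀ x, J₁ (J₁ x) = -x) (h₂ : ∀ x, J₂ (J₂ x) = -x)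
    (x : WithLp 2 (E₁ × E₂)) : J₁.withLpProdMap 2 J₂ (J₁.withLpProdMap 2 J₂ x) = -x := by
  exact congrArg (WithLp.toLp 2) (Prod.ext (h₁ x.fst) (h₂ x.snd))

theorem contDiff_directSum {n : WithTop ℕ∞} (h₁ : ContDiff ℝ n Φ₁) (h₂ : ContDiff ℝ n Φ₂) :
    ContDiff ℝ n (directSum Φ₁ Φ₂) :=
  (WithLp.prodContinuousLinearEquiv 2 ℝ E₁ E₂).symm.contDiff.comp (h₁.prodMk h₂)

theorem dbar_directSum (h₁ : Differentiable ℝ Φ₁) (h₂ : Differentiable ℝ Φ₂) (p : P) :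
    dbar (J₁.withLpProdMap 2 J₂) v e (directSum Φ₁ Φ₂) p
      = WithLp.toLp 2 (dbar J₁ v e Φ₁ p, dbar J₂ v e Φ₂ p) := by
  have hderiv : HasFDerivAt (directSum Φ₁ Φ₂) _ p :=
    (WithLp.prodContinuousLinearEquiv 2 ℝ E₁ E₂).symm.toContinuousLinearMap.hasFDerivAt.comp p
      ((h₁ p).hasFDerivAt.prodMk (h₂ p).hasFDerivAt)
  rw [dbar, hderiv.fderiv]
  rfl

theorem isDbarOrthogonal_directSum (h₁ : Differentiable ℝ Φ₁) (h₂ : Differentiable ℝ Φ₂)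
    (horth₁ : IsDbarOrthogonal J₁ v e Φ₁) (horth₂ : IsDbarOrthogonal J₂ v e Φ₂) :
    IsDbarOrthogonal (J₁.withLpProdMap 2 J₂) v e (directSum Φ₁ Φ₂) := fun p => by
  rw [dbar_directSum h₁ h₂, directSum, WithLp.prod_inner_apply,
    WithLp.prod_inner_apply]
  simp [horth₁ p, horth₂ p]

theorem dbar_const_smul (c : ℝ) (h : Differentiable ℝ Φ₁) (p : P) :
    dbar J₁ v e (c • Φ₁) p = c • dbar J₁ v e Φ₁ p := by
  simp only [dbar, fderiv_const_smul (h p), smul_apply, map_smul, smul_add]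

theorem isDbarOrthogonal_const_smul (c : ℝ) (h : Differentiable ℝ Φ₁)
    (horth : IsDbarOrthogonal J₁ v e Φ₁) : IsDbarOrthogonal J₁ v e (c • Φ₁) := fun p => by
  simp [dbar_const_smul c h, real_inner_smul_left, real_inner_smul_right, horth p]

end DirectSum

section Perturbation

open Function MeasureTheory Filter Topology Set

theorem continuous_const_sq_div_norm_sq_add {X F : Type*} [TopologicalSpace X]
    [SeminormedAddCommGroup F] {Ψ : X → F} (hΨ : Continuous Ψ) {δ : ℝ} (hδ : 0 < δ) :
    Continuous fun x => δ ^ 2 / (‖Ψ x‖ ^ 2 + δ ^ 2) :=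
  continuous_const.div₀ ((hΨ.norm.pow 2).add continuous_const) fun x => by positivity

variable {P : Type*} [NormedAddCommGroup P] [NormedSpace ℝ P]
  {E₁ E₂ : Type*} [NormedAddCommGroup E₁] [InnerProductSpace ℝ E₁]
  [NormedAddCommGroup E₂] [InnerProductSpace ℝ E₂]

/-- The Dirac equation with potential `V` enters the estimates only through these two properties:
`dbar J v e Φ` is pointwise orthogonal to the `J`-complex line of `Φ` and has length `|V| ‖Φ‖`. -/
def IsDbarSolution (J : E₁ →ₗᵢ[ℝ] E₁) (v e : P) (V : P → ℝ) (Φ : P → E₁) : Prop :=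
  IsDbarOrthogonal J v e Φ ∧ ∀ p, ‖dbar J v e Φ p‖ = |V p| * ‖Φ p‖

variable {J₁ : E₁ →ₗᵢ[ℝ] E₁} {J₂ : E₂ →ₗᵢ[ℝ] E₂} {v e : P} {V : P → ℝ} {μ δ : ℝ}
  {Ψ : P → E₁} {χ : P → E₂}

theorem sq_norm_dbar_div_norm_directSum_le (hΨ : Differentiable ℝ Ψ) (hχ : Differentiable ℝ χ)
    (hχ1 : ∀ p, ‖χ p‖ = 1) (hΨV : IsDbarSolution J₁ v e V Ψ)
    (hχμ : IsDbarSolution J₂ v e (fun _ => μ) χ) (hδ : 0 < δ) (p : P) :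
    (‖dbar (J₁.withLpProdMap 2 J₂) v e (directSum Ψ (δ • χ)) p‖
      / ‖directSum Ψ (δ • χ) p‖) ^ 2
      ≤ V p ^ 2 + μ ^ 2 * (δ ^ 2 / (‖Ψ p‖ ^ 2 + δ ^ 2)) := by
  have hpos : 0 < ‖Ψ p‖ ^ 2 + δ ^ 2 := by positivity
  have hdbar : ‖dbar (J₁.withLpProdMap 2 J₂) v e (directSum Ψ (δ • χ)) p‖ ^ 2
      = V p ^ 2 * ‖Ψ p‖ ^ 2 + μ ^ 2 * δ ^ 2 := by
    rw [dbar_directSum hΨ (hχ.const_smul δ), WithLp.prod_norm_sq_eq_of_L2, dbar_const_smul δ hχ]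
    simp only [WithLp.toLp_fst, WithLp.toLp_snd, norm_smul, hΨV.2, hχμ.2, hχ1, mul_pow, sq_abs,
      Real.norm_eq_abs]
    ring
  rw [div_pow, hdbar, norm_directSum_const_smul hχ1, Real.sq_sqrt hpos.le, add_div, ← mul_div_assoc]
  gcongr
  rw [mul_div_assoc]
  exact mul_le_of_le_one_right (sq_nonneg _)
    (div_le_one_of_le₀ (le_add_of_nonneg_right (sq_nonneg δ)) hpos.le)

theorem norm_dbar_div_norm_directSum_le (hΨ : Differentiable ℝ Ψ) (hχ : Differentiable ℝ χ)
    (hχ1 : ∀ p, ‖χ p‖ = 1) (hΨV : IsDbarSolution J₁ v e V Ψ)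
    (hχμ : IsDbarSolution J₂ v e (fun _ => μ) χ) (hδ : 0 < δ) (p : P) :
    ‖dbar (J₁.withLpProdMap 2 J₂) v e (directSum Ψ (δ • χ)) p‖
      / ‖directSum Ψ (δ • χ) p‖
      ≤ |V p| + |μ| * √(δ ^ 2 / (‖Ψ p‖ ^ 2 + δ ^ 2)) := by
  have hθ : 0 ≤ δ ^ 2 / (‖Ψ p‖ ^ 2 + δ ^ 2) := by positivity
  have hcross : 0 ≤ |V p| * (|μ| * √(δ ^ 2 / (‖Ψ p‖ ^ 2 + δ ^ 2))) := by positivity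
  refine (pow_le_pow_iff_left₀ (by positivity) (by positivity) two_ne_zero).1
    ((sq_norm_dbar_div_norm_directSum_le hΨ hχ hχ1 hΨV hχμ hδ p).trans ?_)
  rw [add_sq, mul_pow, Real.sq_sqrt hθ, sq_abs, sq_abs]
  linarith

theorem neg_le_laplacianAlong_log_sqrt (h₁ : ∀ x, J₁ (J₁ x) = -x) (h₂ : ∀ x, J₂ (J₂ x) = -x)
    (hΨ : ContDiff ℝ 2 Ψ) (hχ : ContDiff ℝ 2 χ) (hχ1 : ∀ p, ‖χ p‖ = 1)
    (hΨV : IsDbarSolution J₁ v e V Ψ) (hχμ : IsDbarSolution J₂ v e (fun _ => μ) χ)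
    {U : ℝ} (hU : ∀ p, V p ^ 2 ≤ U) (hδ : 0 < δ) (p : P) :
    -(U + μ ^ 2) ≤ laplacianAlong v e (fun q => Real.log √(‖Ψ q‖ ^ 2 + δ ^ 2)) p := by
  have hΨd := hΨ.differentiable two_ne_zero
  have hχd := hχ.differentiable two_ne_zero
  have hδχ : ContDiff ℝ 2 (δ • χ) := hχ.const_smul δ
  have hlap := laplacianAlong_log_norm (withLpProdMap_apply_apply h₁ h₂)
    (contDiff_directSum hΨ hδχ) (directSum_const_smul_ne_zero hχ1 hδ)
    (isDbarOrthogonal_directSum hΨd (hχd.const_smul δ) hΨV.1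
      (isDbarOrthogonal_const_smul δ hχd hχμ.1)) p
  simp only [norm_directSum_const_smul hχ1] at hlap
  have hle := sq_norm_dbar_div_norm_directSum_le hΨd hχd hχ1 hΨV hχμ hδ p
  rw [norm_directSum_const_smul hχ1] at hle
  have hθ : μ ^ 2 * (δ ^ 2 / (‖Ψ p‖ ^ 2 + δ ^ 2)) ≤ μ ^ 2 :=
    mul_le_of_le_one_right (sq_nonneg _)
      (div_le_one_of_le₀ (le_add_of_nonneg_left (sq_nonneg _)) (by positivity))
  rw [hlap]
  linarith [hU p, sq_nonneg ‖covDeriv (J₁.withLpProdMap 2 J₂)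
      (fun q => NormedSpace.normalize (directSum Ψ (δ • χ) q)) v p‖,
    sq_nonneg ‖covDeriv (J₁.withLpProdMap 2 J₂)
      (fun q => NormedSpace.normalize (directSum Ψ (δ • χ) q)) e p‖]

section Torus

variable [MeasurableSpace P] [BorelSpace P]

theorem integral_sq_norm_dbar_div_norm_directSum_le (hΨ : ContDiff ℝ 1 Ψ) (hχ : ContDiff ℝ 1 χ)
    (hχ1 : ∀ p, ‖χ p‖ = 1) (hΨV : IsDbarSolution J₁ v e V Ψ)
    (hχμ : IsDbarSolution J₂ v e (fun _ => μ) χ) (hV : Continuous V) (hδ : 0 < δ) (w : P) :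
    ∫ p, (‖dbar (J₁.withLpProdMap 2 J₂) v e (directSum Ψ (δ • χ)) p‖
      / ‖directSum Ψ (δ • χ) p‖) ^ 2 ∂cellMeasure v w
      ≤ ∫ p, V p ^ 2 ∂cellMeasure v w
        + μ ^ 2 * ∫ p, δ ^ 2 / (‖Ψ p‖ ^ 2 + δ ^ 2) ∂cellMeasure v w := by
  have hδχ : ContDiff ℝ 1 (δ • χ) := hχ.const_smul δ
  have hq := continuous_norm_dbar_div_norm (J := J₁.withLpProdMap 2 J₂) (v := v) (e := e)
    (contDiff_directSum hΨ hδχ) (directSum_const_smul_ne_zero hχ1 hδ)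
  have hθ := continuous_const_sq_div_norm_sq_add hΨ.continuous hδ
  rw [← integral_const_mul, ← integral_add (by exact integrable_cellMeasure (hV.pow 2) v w)
    (by exact integrable_cellMeasure (hθ.const_mul _) v w)]
  exact integral_mono (integrable_cellMeasure (hq.pow 2) v w)
    (integrable_cellMeasure ((hV.pow 2).add (hθ.const_mul _)) v w)
    (sq_norm_dbar_div_norm_directSum_le (hΨ.differentiable one_ne_zero)
      (hχ.differentiable one_ne_zero) hχ1 hΨV hχμ hδ)

theorem integral_norm_dbar_div_norm_directSum_le (hΨ : ContDiff ℝ 1 Ψ) (hχ : ContDiff ℝ 1 χ)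
    (hχ1 : ∀ p, ‖χ p‖ = 1) (hΨV : IsDbarSolution J₁ v e V Ψ)
    (hχμ : IsDbarSolution J₂ v e (fun _ => μ) χ) (hV : Continuous V) (hδ : 0 < δ) (w : P) :
    ∫ p, ‖dbar (J₁.withLpProdMap 2 J₂) v e (directSum Ψ (δ • χ)) p‖
      / ‖directSum Ψ (δ • χ) p‖ ∂cellMeasure v w
      ≤ ∫ p, |V p| ∂cellMeasure v w
        + |μ| * √(∫ p, δ ^ 2 / (‖Ψ p‖ ^ 2 + δ ^ 2) ∂cellMeasure v w) := by
  have hδχ : ContDiff ℝ 1 (δ • χ) := hχ.const_smul δ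
  have hq := continuous_norm_dbar_div_norm (J := J₁.withLpProdMap 2 J₂) (v := v) (e := e)
    (contDiff_directSum hΨ hδχ) (directSum_const_smul_ne_zero hχ1 hδ)
  have hθ := continuous_const_sq_div_norm_sq_add hΨ.continuous hδ
  have hsqrt : ∫ p, √(δ ^ 2 / (‖Ψ p‖ ^ 2 + δ ^ 2)) ∂cellMeasure v w
      ≤ √(∫ p, δ ^ 2 / (‖Ψ p‖ ^ 2 + δ ^ 2) ∂cellMeasure v w) := by
    have hcs := integral_cellMeasure_mul_le_sqrt (v := v) (w := w) hθ.sqrt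
      (continuous_const (y := (1 : ℝ))) le_rfl le_rfl
    have hsq (p : P) : √(δ ^ 2 / (‖Ψ p‖ ^ 2 + δ ^ 2)) ^ 2 = δ ^ 2 / (‖Ψ p‖ ^ 2 + δ ^ 2) :=
      Real.sq_sqrt (by positivity)
    simpa only [hsq, mul_one, one_pow, integral_const, probReal_univ, smul_eq_mul] using hcs
  calc ∫ p, ‖dbar (J₁.withLpProdMap 2 J₂) v e (directSum Ψ (δ • χ)) p‖
        / ‖directSum Ψ (δ • χ) p‖ ∂cellMeasure v w
      ≤ ∫ p, |V p| + |μ| * √(δ ^ 2 / (‖Ψ p‖ ^ 2 + δ ^ 2)) ∂cellMeasure v w :=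
        integral_mono (integrable_cellMeasure hq v w)
          (integrable_cellMeasure (hV.abs.add (hθ.sqrt.const_mul _)) v w)
          (norm_dbar_div_norm_directSum_le (hΨ.differentiable one_ne_zero)
            (hχ.differentiable one_ne_zero) hχ1 hΨV hχμ hδ)
    _ = ∫ p, |V p| ∂cellMeasure v w
          + |μ| * ∫ p, √(δ ^ 2 / (‖Ψ p‖ ^ 2 + δ ^ 2)) ∂cellMeasure v w := by
        rw [integral_add (by exact integrable_cellMeasure hV.abs v w)
          (by exact integrable_cellMeasure (hθ.sqrt.const_mul _) v w), integral_const_mul]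
    _ ≤ _ := by gcongr

variable {a b : ℝ} (h₁ : ∀ x, J₁ (J₁ x) = -x) (h₂ : ∀ x, J₂ (J₂ x) = -x)
  (hΨ : ContDiff ℝ 2 Ψ) (hΨ0 : Ψ ≠ 0) (hχ : ContDiff ℝ 2 χ) (hχ1 : ∀ p, ‖χ p‖ = 1)
  (hΨV : IsDbarSolution J₁ v e V Ψ) (hχμ : IsDbarSolution J₂ v e (fun _ => μ) χ)
  (hspan : Submodule.span ℝ {v, a • v + b • e} = ⊤)
  (hΨv : Periodic Ψ v) (hΨw : Antiperiodic Ψ (a • v + b • e))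
  (hV : Continuous V) (hVv : Periodic V v) (hVw : Periodic V (a • v + b • e))
include h₁ h₂ hΨ hΨ0 hχ hχ1 hΨV hχμ hspan hΨv hΨw hV hVv hVw

theorem tendsto_integral_sq_div_norm_sq_add_sq :
    Tendsto (fun δ : ℝ => ∫ p, δ ^ 2 / (‖Ψ p‖ ^ 2 + δ ^ 2) ∂cellMeasure v (a • v + b • e))
      (𝓝[>] 0) (𝓝 0) := by
  obtain ⟨U, hU⟩ := exists_le_of_periodic (f := fun p => V p ^ 2) (hV.pow 2) hspan
    (hVv.comp (· ^ 2)) (hVw.comp (· ^ 2))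
  have hU0 : 0 ≤ U := (sq_nonneg (V 0)).trans (hU 0)
  obtain ⟨p, hp⟩ := Function.ne_iff.1 hΨ0
  refine tendsto_integral_sq_div_add_sq (hΨ.continuous.norm.pow 2).measurable
    (fun p => sq_nonneg _)
    (cellMeasure_real_zero_set_eq_zero (hΨ.norm_sq ℝ) (fun p => sq_nonneg _)
      ⟨p, pow_ne_zero 2 (norm_ne_zero_iff.2 hp)⟩ hspan (hΨv.comp (‖·‖ ^ 2))
      ((periodic_norm_of_antiperiodic hΨw).comp (· ^ 2)) (add_nonneg hU0 (sq_nonneg μ))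
      fun δ hδ => neg_le_laplacianAlong_log_sqrt h₁ h₂ hΨ hχ hχ1 hΨV hχμ hU hδ)

theorem pi_le_mul_integral_abs_of_isDbarSolution
    (hχv : Periodic χ v) (hχw : Antiperiodic χ (a • v + b • e)) (hb : 0 ≤ b) (hb2 : 29 / 16 < b ^ 2)
    (hμ : b * μ = Real.pi) (hint : ∫ p, V p ^ 2 ∂cellMeasure v (a • v + b • e) = μ ^ 2) :
    Real.pi ≤ b * ∫ p, |V p| ∂cellMeasure v (a • v + b • e) := by
  let κ (t : ℝ) : ℝ := μ ^ 2 + μ ^ 2 * t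
  let D (t : ℝ) : ℝ := (b ^ 2 * κ t - Real.pi ^ 2) / (b ^ 2 - 29 / 16)
  let R (t : ℝ) : ℝ := b * (∫ p, |V p| ∂cellMeasure v (a • v + b • e) + |μ| * √t)
    + (|a| + b) * √(D t) + |a| * D t + b * √(D t * κ t)
  have hD0 : D 0 = 0 := by simp only [D, κ, mul_zero, add_zero, ← mul_pow, hμ, sub_self, zero_div]
  have hR0 : R 0 = b * ∫ p, |V p| ∂cellMeasure v (a • v + b • e) := by
    simp only [R, hD0, Real.sqrt_zero, mul_zero, zero_mul, add_zero]
  have hR : Continuous R := by fun_prop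
  have htendsto := (hR.tendsto 0).comp (tendsto_integral_sq_div_norm_sq_add_sq h₁ h₂ hΨ hΨ0 hχ hχ1
    hΨV hχμ hspan hΨv hΨw hV hVv hVw)
  rw [← hR0]
  refine ge_of_tendsto htendsto (eventually_mem_nhdsWithin.mono fun δ (hδ : 0 < δ) => ?_)
  have hδχ : ContDiff ℝ 2 (δ • χ) := hχ.const_smul δ
  have hκ := integral_sq_norm_dbar_div_norm_directSum_le (hΨ.of_le one_le_two)
    (hχ.of_le one_le_two) hχ1 hΨV hχμ hV hδ (a • v + b • e)
  rw [hint] at hκ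
  refine (pi_le_of_isDbarOrthogonal (withLpProdMap_apply_apply h₁ h₂) (contDiff_directSum hΨ hδχ)
    (directSum_const_smul_ne_zero hχ1 hδ) (isDbarOrthogonal_directSum
      (hΨ.differentiable two_ne_zero) (hδχ.differentiable two_ne_zero) hΨV.1
      (isDbarOrthogonal_const_smul δ (hχ.differentiable two_ne_zero) hχμ.1)) hb hb2 hspan
    (periodic_directSum hΨv (hχv.comp (δ • ·))) (antiperiodic_directSum hΨw fun p => by
      simp only [Pi.smul_apply, hχw p, smul_neg]) hκ).trans ?_
  dsimp only [comp_apply, R, D, κ]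
  gcongr
  exact integral_norm_dbar_div_norm_directSum_le (hΨ.of_le one_le_two) (hχ.of_le one_le_two) hχ1
    hΨV hχμ hV hδ _

theorem abs_eq_of_isDbarSolution
    (hχv : Periodic χ v) (hχw : Antiperiodic χ (a • v + b • e)) (hb : 0 < b) (hb2 : 29 / 16 < b ^ 2)
    (hμ : b * μ = Real.pi) (hint : ∫ p, V p ^ 2 ∂cellMeasure v (a • v + b • e) = μ ^ 2)
    (p : P) : |V p| = μ := by
  have hpi := pi_le_mul_integral_abs_of_isDbarSolution h₁ h₂ hΨ hΨ0 hχ hχ1 hΨV hχμ hspan hΨv hΨw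
    hV hVv hVw hχv hχw hb.le hb2 hμ hint
  rw [← hμ] at hpi
  have hmean : μ ≤ ∫ p, |V p| ∂cellMeasure v (a • v + b • e) := le_of_mul_le_mul_left hpi hb
  have hμ0 : 0 ≤ μ := by
    rw [← mul_nonneg_iff_of_pos_left hb, hμ]
    exact Real.pi_pos.le
  have hvar : ∫ p, (|V p| - μ) ^ 2 ∂cellMeasure v (a • v + b • e)
      = 2 * μ * (μ - ∫ p, |V p| ∂cellMeasure v (a • v + b • e)) := by
    have hexpand (p : P) : (|V p| - μ) ^ 2 = V p ^ 2 - 2 * μ * |V p| + μ ^ 2 := by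
      rw [sub_sq, sq_abs]; ring
    simp only [hexpand]
    rw [integral_add (by exact integrable_cellMeasure (by fun_prop) _ _) (integrable_const _),
      integral_sub (by exact integrable_cellMeasure (by fun_prop) _ _)
        (by exact integrable_cellMeasure (by fun_prop) _ _), integral_const_mul, hint,
      integral_const, probReal_univ, one_smul]
    ring
  have hzero := eq_zero_of_integral_cellMeasure_eq_zero (f := fun p => (|V p| - μ) ^ 2)
    (by fun_prop) (fun p => sq_nonneg _) hspan (hVv.comp fun x => (|x| - μ) ^ 2)
    (hVw.comp fun x => (|x| - μ) ^ 2)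
    (le_antisymm (by
      rw [hvar]
      exact mul_nonpos_of_nonneg_of_nonpos (by positivity) (sub_nonpos.2 hmean))
      (integral_nonneg fun p => sq_nonneg _)) p
  exact sub_eq_zero.1 (pow_eq_zero_iff two_ne_zero |>.1 hzero)

end Torus

end Perturbation

section Dirac

open Function MeasureTheory
open scoped RealInnerProductSpace

/-- The imaginary unit as a point of the unit circle. -/
noncomputable def circleI : Circle := ⟨Complex.I, by simp [Submonoid.unitSphere]⟩

theorem rotation_circleI_apply (z : ℂ) : rotation circleI z = Complex.I * z := rfl

theorem rotation_circleI_inv_apply (z : ℂ) : rotation circleI⁻¹ z = -Complex.I * z := by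
  rw [rotation_apply, Circle.coe_inv, ← Complex.inv_I]
  rfl

/-- Multiplication by `i` on the first and by `-i` on the second spinor component. The opposite
signs make the flat Dirac operator a `dbar` operator on `ℂ²` composed with a rotation. -/
noncomputable def spinorComplexStructure : WithLp 2 (ℂ × ℂ) →ₗᵢ[ℝ] WithLp 2 (ℂ × ℂ) :=
  (rotation circleI).toLinearIsometry.withLpProdMap 2 (rotation circleI⁻¹).toLinearIsometry

theorem spinorComplexStructure_toLp (z w : ℂ) :
    spinorComplexStructure (WithLp.toLp 2 (z, w))
      = WithLp.toLp 2 (Complex.I * z, -Complex.I * w) := by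
  rw [← rotation_circleI_inv_apply]
  rfl

theorem spinorComplexStructure_apply_apply (x : WithLp 2 (ℂ × ℂ)) :
    spinorComplexStructure (spinorComplexStructure x) = -x := by
  refine withLpProdMap_apply_apply (fun z => ?_) (fun z => ?_) x
  · simp only [LinearIsometryEquiv.coe_toLinearIsometry, rotation_circleI_apply]
    linear_combination z * Complex.I_mul_I
  · simp only [LinearIsometryEquiv.coe_toLinearIsometry, rotation_circleI_inv_apply]
    linear_combination z * Complex.I_mul_I

/-- The flat Dirac equation with potential `V` for the spinor `(φ₁, φ₂)`. -/
def IsDiracSolution (V : ℝ × ℝ → ℝ) (φ₁ φ₂ : ℝ × ℝ → ℂ) : Prop :=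
  ∀ p, dX φ₂ p - Complex.I * dY φ₂ p = V p * φ₁ p ∧ -(dX φ₁ p + Complex.I * dY φ₁ p) = V p * φ₂ p

variable {V : ℝ × ℝ → ℝ} {φ₁ φ₂ : ℝ × ℝ → ℂ}

theorem dbar_directSum_of_isDiracSolution (h₁ : Differentiable ℝ φ₁) (h₂ : Differentiable ℝ φ₂)
    (h : IsDiracSolution V φ₁ φ₂) (p : ℝ × ℝ) :
    dbar spinorComplexStructure (1, 0) (0, 1) (directSum φ₁ φ₂) p
      = WithLp.toLp 2 (-(V p * φ₂ p), V p * φ₁ p) := by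
  rw [spinorComplexStructure, dbar_directSum h₁ h₂, ← (h p).1, ← (h p).2, neg_neg, sub_eq_add_neg,
    ← neg_mul]
  simp only [dbar, LinearIsometryEquiv.coe_toLinearIsometry, rotation_circleI_apply,
    rotation_circleI_inv_apply, dX, dY]

theorem isDbarSolution_of_isDiracSolution (h₁ : Differentiable ℝ φ₁) (h₂ : Differentiable ℝ φ₂)
    (h : IsDiracSolution V φ₁ φ₂) :
    IsDbarSolution spinorComplexStructure (1, 0) (0, 1) V (directSum φ₁ φ₂) := by
  refine ⟨fun p => ?_, fun p => ?_⟩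
  · rw [dbar_directSum_of_isDiracSolution h₁ h₂ h, directSum, spinorComplexStructure_toLp,
      WithLp.prod_inner_apply, WithLp.prod_inner_apply]
    simp only [Complex.inner, Complex.mul_re, Complex.mul_im, Complex.neg_re,
      Complex.neg_im, Complex.conj_re, Complex.conj_im, Complex.ofReal_re, Complex.ofReal_im,
      Complex.I_re, Complex.I_im]
    constructor <;> ring
  · rw [dbar_directSum_of_isDiracSolution h₁ h₂ h, directSum, WithLp.prod_norm_eq_of_L2,
      WithLp.prod_norm_eq_of_L2, ← Real.sqrt_sq_eq_abs, ← Real.sqrt_mul (sq_nonneg _)]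
    simp only [WithLp.toLp_fst, WithLp.toLp_snd, norm_neg, norm_mul, Complex.norm_real, mul_pow,
      Real.norm_eq_abs, sq_abs]
    congr 1
    ring

/-- The eigenspinor `(cos (μ y), i sin (μ y))` of the flat metric. -/
noncomputable def flatSpinor (μ : ℝ) : ℝ × ℝ → WithLp 2 (ℂ × ℂ) :=
  directSum (fun p => (Real.cos (μ * p.2) : ℂ)) fun p => Complex.I * Real.sin (μ * p.2)

theorem contDiff_flatSpinor (μ : ℝ) {n : WithTop ℕ∞} : ContDiff ℝ n (flatSpinor μ) :=
  have harg : ContDiff ℝ n fun p : ℝ × ℝ => μ * p.2 := contDiff_const.mul contDiff_snd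
  contDiff_directSum (Complex.ofRealCLM.contDiff.comp harg.cos)
    (contDiff_const.mul (Complex.ofRealCLM.contDiff.comp harg.sin))

theorem norm_flatSpinor (μ : ℝ) (p : ℝ × ℝ) : ‖flatSpinor μ p‖ = 1 := by
  rw [flatSpinor, directSum, WithLp.prod_norm_eq_of_L2]
  simp [-Complex.ofReal_cos, -Complex.ofReal_sin]

theorem periodic_flatSpinor (μ : ℝ) : Periodic (flatSpinor μ) (1, 0) := fun p => by
  simp [flatSpinor, directSum]

theorem antiperiodic_flatSpinor {μ a b : ℝ} (hμ : b * μ = Real.pi) :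
    Antiperiodic (flatSpinor μ) (a, b) := by
  have harg (p : ℝ × ℝ) : μ * (p + (a, b)).2 = μ * p.2 + Real.pi := by
    rw [Prod.snd_add, mul_add, mul_comm μ b, hμ]
  refine antiperiodic_directSum (fun p => ?_) fun p => ?_
  · rw [harg, Real.cos_add_pi, Complex.ofReal_neg]
  · rw [harg, Real.sin_add_pi, Complex.ofReal_neg, mul_neg]

theorem isDbarSolution_flatSpinor (μ : ℝ) :
    IsDbarSolution spinorComplexStructure (1, 0) (0, 1) (fun _ => μ) (flatSpinor μ) := by
  have hcos (p : ℝ × ℝ) : HasFDerivAt (fun p : ℝ × ℝ => (Real.cos (μ * p.2) : ℂ)) _ p :=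
    Complex.ofRealCLM.hasFDerivAt.comp p (hasFDerivAt_snd.const_mul μ).cos
  have hsin (p : ℝ × ℝ) : HasFDerivAt (fun p : ℝ × ℝ => Complex.I * (Real.sin (μ * p.2) : ℂ)) _ p :=
    (Complex.ofRealCLM.hasFDerivAt.comp p (hasFDerivAt_snd.const_mul μ).sin).const_mul Complex.I
  refine isDbarSolution_of_isDiracSolution (fun p => (hcos p).differentiableAt)
    (fun p => (hsin p).differentiableAt) fun p => ⟨?_, ?_⟩
  · simp only [dX, dY, (hsin p).fderiv]
    simp only [ContinuousLinearMap.comp_smulₛₗ, Real.ringHom_apply, smul_apply,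
      ContinuousLinearMap.comp_apply, ContinuousLinearMap.coe_snd', Complex.ofRealCLM_apply,
      Complex.ofReal_zero, smul_zero, smul_eq_mul, mul_zero, Complex.ofReal_one,
      Complex.real_smul, mul_one, ← mul_assoc, Complex.I_mul_I, neg_mul, one_mul, sub_neg_eq_add,
      zero_add]
    ring
  · simp only [dX, dY, (hcos p).fderiv]
    simp only [ContinuousLinearMap.comp_smulₛₗ, Real.ringHom_apply, neg_smul, neg_apply,
      smul_apply, ContinuousLinearMap.comp_apply, ContinuousLinearMap.coe_snd',
      Complex.ofRealCLM_apply, Complex.ofReal_zero, smul_zero, neg_zero, Complex.ofReal_one,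
      Complex.real_smul, mul_one, mul_neg, zero_add, neg_neg]
    ring

theorem span_one_zero_pair_eq_top {a b : ℝ} (hb : b ≠ 0) :
    Submodule.span ℝ {((1 : ℝ), (0 : ℝ)), (a, b)} = ⊤ := by
  refine Submodule.eq_top_iff'.2 fun p => Submodule.mem_span_pair.2
    ⟨p.1 - p.2 / b * a, p.2 / b, ?_⟩
  ext <;> simp [hb]

theorem integral_cellMeasure_one_zero {f : ℝ × ℝ → ℝ} (hf : Continuous f) (a b : ℝ) :
    ∫ p, f p ∂cellMeasure (1, 0) (a, b)
      = ∫ t in (0 : ℝ)..1, ∫ s in (0 : ℝ)..1, f (s + t * a, t * b) := by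
  rw [integral_cellMeasure_swap hf]
  simp only [Prod.smul_mk, Prod.mk_add_mk, smul_eq_mul, mul_one, mul_zero, zero_add]

theorem integral_sq_mul_exp_eq {ω : ℝ × ℝ → ℝ} (hω : Continuous ω) {a b lam : ℝ} (hb : b ≠ 0)
    (h : lam ^ 2 * b *
      (∫ t in (0 : ℝ)..1, ∫ s in (0 : ℝ)..1, Real.exp (2 * ω (s + t * a, t * b)))
      = Real.pi ^ 2 / b) :
    ∫ p, (lam * Real.exp (ω p)) ^ 2 ∂cellMeasure (1, 0) (a, b) = (Real.pi / b) ^ 2 := by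
  simp only [mul_pow, ← Real.exp_nat_mul, Nat.cast_two]
  rw [integral_const_mul, integral_cellMeasure_one_zero (by fun_prop), div_pow,
    eq_div_iff (pow_ne_zero 2 hb)]
  rw [eq_div_iff hb] at h
  linear_combination h

theorem abs_eq_pi_div_of_isDiracSolution {a b : ℝ} (hb : √29 / 4 < b)
    (hφ₁ : ContDiff ℝ 2 φ₁) (hφ₂ : ContDiff ℝ 2 φ₂) (hφ0 : directSum φ₁ φ₂ ≠ 0)
    (hφv : Periodic (directSum φ₁ φ₂) (1, 0)) (hφw : Antiperiodic (directSum φ₁ φ₂) (a, b))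
    (hV : Continuous V) (hVv : Periodic V (1, 0)) (hVw : Periodic V (a, b))
    (hφV : IsDiracSolution V φ₁ φ₂)
    (hint : ∫ p, V p ^ 2 ∂cellMeasure (1, 0) (a, b) = (Real.pi / b) ^ 2) (p : ℝ × ℝ) :
    |V p| = Real.pi / b := by
  have hb0 : 0 < b := (by positivity : 0 < √29 / 4).trans hb
  have hb2 : 29 / 16 < b ^ 2 := by
    have := pow_lt_pow_left₀ hb (by positivity) two_ne_zero
    rw [div_pow, Real.sq_sqrt (by norm_num)] at this
    linarith
  have hμ : b * (Real.pi / b) = Real.pi := mul_div_cancel₀ Real.pi hb0.ne'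
  have hw : (a, b) = a • ((1 : ℝ), (0 : ℝ)) + b • ((0 : ℝ), (1 : ℝ)) := by simp
  have hspan := span_one_zero_pair_eq_top (a := a) hb0.ne'
  have hχw := antiperiodic_flatSpinor (a := a) hμ
  rw [hw] at hφw hVw hint hspan hχw
  exact abs_eq_of_isDbarSolution spinorComplexStructure_apply_apply
    spinorComplexStructure_apply_apply (contDiff_directSum hφ₁ hφ₂) hφ0 (contDiff_flatSpinor _)
    (norm_flatSpinor _) (isDbarSolution_of_isDiracSolution (hφ₁.differentiable two_ne_zero)
      (hφ₂.differentiable two_ne_zero) hφV) (isDbarSolution_flatSpinor _) hspan hφv hφw hV hVv hVw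
    (periodic_flatSpinor _) hχw hb0 hb2 hμ hint p

end Dirac

theorem dirac_first_eigenvalue_flat_torus_nontrivial_spin_unique_minimiser_general
    (a b lam : ℝ) (hb : √29 / 4 < b) (ω : ℝ × ℝ → ℝ) (hω : Continuous ω)
    (hω1 : ∀ p : ℝ × ℝ, ω (p.1 + 1, p.2) = ω p)
    (hω2 : ∀ p : ℝ × ℝ, ω (p.1 + a, p.2 + b) = ω p)
    (φ : ℝ × ℝ → ℂ × ℂ) (hφ : ContDiff ℝ 2 φ) (hφ0 : φ ≠ 0)
    (hφ1 : ∀ p : ℝ × ℝ, φ (p.1 + 1, p.2) = φ p)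
    (hφ2 : ∀ p : ℝ × ℝ, φ (p.1 + a, p.2 + b) = -φ p)
    (heq1 : ∀ p : ℝ × ℝ,
      dX (fun q => (φ q).2) p - Complex.I * dY (fun q => (φ q).2) p
        = (lam : ℂ) * Real.exp (ω p) * (φ p).1)
    (heq2 : ∀ p : ℝ × ℝ,
      -(dX (fun q => (φ q).1) p + Complex.I * dY (fun q => (φ q).1) p)
        = (lam : ℂ) * Real.exp (ω p) * (φ p).2)
    (hequality : lam ^ 2 * b *
      (∫ t in (0 : ℝ)..1, ∫ s in (0 : ℝ)..1, Real.exp (2 * ω (s + t * a, t * b)))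
      = Real.pi ^ 2 / b) :
    ∀ p q : ℝ × ℝ, ω p = ω q := by
  have hb0 : 0 < b := (by positivity : 0 < √29 / 4).trans hb
  have hφ0' : directSum (fun q => (φ q).1) (fun q => (φ q).2) ≠ 0 := fun h =>
    hφ0 (funext fun p => (WithLp.toLp_injective 2 (congrFun h p) : φ p = 0))
  have hω1' (p : ℝ × ℝ) : ω (p + (1, 0)) = ω p := by
    simpa only [Prod.add_def, add_zero] using hω1 p
  have hφ1' (p : ℝ × ℝ) : φ (p + (1, 0)) = φ p := by
    simpa only [Prod.add_def, add_zero] using hφ1 p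
  have hconst := abs_eq_pi_div_of_isDiracSolution (V := fun p => lam * Real.exp (ω p)) hb hφ.fst
    hφ.snd hφ0' (fun p => by simp only [directSum, hφ1'])
    (antiperiodic_directSum (fun p => congrArg Prod.fst (hφ2 p)) fun p =>
      congrArg Prod.snd (hφ2 p))
    (by fun_prop) (fun p => by simp only [hω1'])
    (fun p => congrArg (lam * Real.exp ·) (hω2 p))
    (fun p => ⟨by push_cast; exact_mod_cast heq1 p, by push_cast; exact_mod_cast heq2 p⟩)
    (integral_sq_mul_exp_eq hω hb0.ne' hequality)
  have hlam : lam ≠ 0 := by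
    rintro rfl
    have := hconst 0
    rw [zero_mul, abs_zero] at this
    exact (div_pos Real.pi_pos hb0).ne this
  intro p q
  have := (hconst p).trans (hconst q).symm
  rwa [abs_mul, abs_mul, mul_right_inj' (abs_ne_zero.2 hlam), Real.abs_exp, Real.abs_exp,
    Real.exp_eq_exp] at this

/-- Theorem 4.4 (uniqueness, non-trivial spin structure): if equality `λ² · Area = π²/b`
holds for a positive Dirac eigenvalue of the conformal metric `e^{2ω} g_{a,b}` on the torus
with the non-trivial spin structure (`|a| ≤ 1/2`, `b > π/2`), then `ω` is constant, i.e.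
the flat metric is the unique smooth minimiser. -/
theorem dirac_first_eigenvalue_flat_torus_nontrivial_spin_unique_minimiser
    (a b lam : ℝ) (ha : |a| ≤ 1 / 2) (hb : b > Real.pi / 2)
    (ω : ℝ × ℝ → ℝ) (hω : ContDiff ℝ (⊤ : ℕ∞) ω)
    (hω1 : ∀ p : ℝ × ℝ, ω (p.1 + 1, p.2) = ω p)
    (hω2 : ∀ p : ℝ × ℝ, ω (p.1 + a, p.2 + b) = ω p)
    (hlam : 0 < lam)
    (φ : ℝ × ℝ → ℂ × ℂ) (hφ : ContDiff ℝ (⊤ : ℕ∞) φ) (hφ0 : φ ≠ 0)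
    (hφ1 : ∀ p : ℝ × ℝ, φ (p.1 + 1, p.2) = φ p)
    (hφ2 : ∀ p : ℝ × ℝ, φ (p.1 + a, p.2 + b) = -φ p)
    (heq1 : ∀ p : ℝ × ℝ,
      dX (fun q => (φ q).2) p - Complex.I * dY (fun q => (φ q).2) p
        = (lam : ℂ) * Real.exp (ω p) * (φ p).1)
    (heq2 : ∀ p : ℝ × ℝ,
      -(dX (fun q => (φ q).1) p + Complex.I * dY (fun q => (φ q).1) p)
        = (lam : ℂ) * Real.exp (ω p) * (φ p).2)
    (hequality : lam ^ 2 * b *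
      (∫ t in (0:ℝ)..1, ∫ s in (0:ℝ)..1, Real.exp (2 * ω (s + t * a, t * b)))
      = Real.pi ^ 2 / b) :
    ∀ p q : ℝ × ℝ, ω p = ω q := by
  refine dirac_first_eigenvalue_flat_torus_nontrivial_spin_unique_minimiser_general a b lam ?_ ω
    hω.continuous hω1 hω2 φ (contDiff_infty.1 hφ 2) hφ0 hφ1 hφ2 heq1 heq2 hequality
  have hsqrt : √29 < 6 := (Real.sqrt_lt' (by norm_num)).2 (by norm_num)
  linarith [Real.pi_gt_three]
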